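/- arXiv:2304.01579 — 2 statements merged into one kernel-verified Lean document; each statement's English description precedes it below -/
import Mathlib

section
/- For integers m ≥ 1, n ≥ 1 and any parameter μ ∈ ℝ, the generalised Laguerre polynomials satisfy the Hirota bilinear equations D_z(T_{m,n−1}^{(μ+1)} • T_{m,n}^{(μ)}) = T_{m+1,n−1}^{(μ)} T_{m−1,n}^{(μ+1)}, D_z(T_{m,n−1}^{(μ+1)} • T_{m+1,n}^{(μ−1)}) = T_{m+1,n−1}^{(μ)} T_{m,n}^{(μ)}, D_z(T_{m,n−1}^{(μ+1)} • T_{m,n}^{(μ−1)}) = T_{m+1,n−1}^{(μ)} T_{m−1,n}^{(μ)}, D_z(T_{m+1,n}^{(μ)} • T_{m,n}^{(μ+1)}) = T_{m+1,n−1}^{(μ+1)} T_{m,n+1}^{(μ)}, D_z(T_{m,n}^{(μ)} • T_{m,n}^{(μ+1)}) = T_{m+1,n−1}^{(μ+1)} T_{m−1,n+1}^{(μ)}, D_z(T_{m+1,n}^{(μ)} • T_{m,n}^{(μ)}) = T_{m+1,n−1}^{(μ+1)} T_{m,n+1}^{(μ−1)}, together with the discrete bilinear equation T_{m,n}^{(μ)}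 T_{m,n−1}^{(μ)} − T_{m−1,n}^{(μ)} T_{m+1,n−1}^{(μ)} = T_{m,n}^{(μ−1)} T_{m,n−1}^{(μ+1)}. -/
noncomputable section

open Finset

/-- Generalized binomial coefficient `C(x, k)` for real `x`. -/
def genBinom (x : ℝ) (k : ℕ) : ℝ :=
  (∏ i ∈ Finset.range k, (x - i)) / (Nat.factorial k)

/-- Associated Laguerre polynomial `L_n^{(α)}(z)`, with the convention `L_n^{(α)} = 0` for `n < 0`. -/
def lagL (n : ℤ) (α : ℝ) : ℝ → ℝ := fun z =>
  if n < 0 then 0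
  else ∑ k ∈ Finset.range (n.toNat + 1),
    (-1 : ℝ) ^ k * genBinom ((n : ℝ) + α) (n.toNat - k) * z ^ k / (Nat.factorial k)

/-- Generalised Laguerre polynomial
`T_{m,n}^{(μ)}(z) = det[(d/dz)^{j+k} L_{m+n}^{(μ+1)}(z)]_{j,k=0}^{n-1}`
(with `T_{m,0}^{(μ)} = 1`, the empty determinant). -/
def genLag (m : ℤ) (n : ℕ) (μ : ℝ) : ℝ → ℝ := fun z =>
  Matrix.det (Matrix.of fun j k : Fin n =>
    iteratedDeriv ((j : ℕ) + (k : ℕ)) (lagL (m + n) (μ + 1)) z)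

/-- Wronskian `Wr(f_1, …, f_r)(z) = det[(d/dz)^{j-1} f_k(z)]`. -/
def wronskian {r : ℕ} (f : Fin r → ℝ → ℝ) : ℝ → ℝ := fun z =>
  Matrix.det (Matrix.of fun j k : Fin r => iteratedDeriv (j : ℕ) (f k) z)

/-- The constant `c_{m,n} = (-1)^{n(2m+1+n)/2} ∏_{j=1}^n (j-1)!/(m+j)!`. -/
def cmn (m n : ℕ) : ℝ :=
  (-1 : ℝ) ^ (n * (2 * m + 1 + n) / 2) *
    ∏ j ∈ Finset.range n, (Nat.factorial j : ℝ) / (Nat.factorial (m + j + 1))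

/-- `τ_{m,n}^{(μ)}(z) = det[(z d/dz)^{j+k} L_{m+n}^{(n+μ)}(z)]_{j,k=0}^{n-1}`. -/
def tauP (m : ℤ) (n : ℕ) (μ : ℝ) : ℝ → ℝ := fun z =>
  Matrix.det (Matrix.of fun j k : Fin n =>
    ((fun (g : ℝ → ℝ) => fun t => t * deriv g t)^[(j : ℕ) + (k : ℕ)]
      (lagL (m + n) ((n : ℝ) + μ))) z)

/-- Hirota bilinear operator `D_z(f • g) = f' g - f g'`. -/
def hirota (f g : ℝ → ℝ) (z : ℝ) : ℝ := deriv f z * g z - f z * deriv g z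

/-- Probabilists' Hermite polynomial `He_n` as a real function. -/
def He (n : ℕ) : ℝ → ℝ := fun z => Polynomial.aeval z (Polynomial.hermite n)

/-- The fifth Painlevé equation (with `δ = -1/2`) for `w` with parameters `(a, b, c)`,
holding at the point `z`. -/
def PV (a b c : ℝ) (w : ℝ → ℝ) (z : ℝ) : Prop :=
  iteratedDeriv 2 w z =
    (1 / (2 * w z) + 1 / (w z - 1)) * (deriv w z) ^ 2
      - (1 / z) * deriv w z
      + (w z - 1) ^ 2 * (a * (w z) ^ 2 + b) / (z ^ 2 * w z)
      + c * w z / z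
      - w z * (w z + 1) / (2 * (w z - 1))

/-- The Jimbo–Miwa–Okamoto `σ`-equation `S_V` with parameters `(ν₁, ν₂, ν₃)`,
holding at the point `z`. -/
def SV (ν₁ ν₂ ν₃ : ℝ) (σ : ℝ → ℝ) (z : ℝ) : Prop :=
  (z * iteratedDeriv 2 σ z) ^ 2 =
    (2 * (deriv σ z) ^ 2 + (ν₁ + ν₂ + ν₃ - z) * deriv σ z + σ z) ^ 2
      - 4 * deriv σ z * (deriv σ z + ν₁) * (deriv σ z + ν₂) * (deriv σ z + ν₃)


theorem genBinom_zero (x : ℝ) : genBinom x 0 = 1 := by simp [genBinom]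

theorem genBinom_pascal (x : ℝ) (k : ℕ) :
    genBinom (x + 1) (k + 1) = genBinom x (k + 1) + genBinom x k := by
  unfold genBinom
  have h1 : ∏ i ∈ Finset.range (k + 1), (x + 1 - (i : ℝ))
      = (∏ i ∈ Finset.range k, (x - (i : ℝ))) * (x + 1) := by
    rw [Finset.prod_range_succ']
    congr 1
    · apply Finset.prod_congr rfl
      intro i _
      push_cast; ring
    · simp
  rw [h1, Finset.prod_range_succ, Nat.factorial_succ]
  have : (Nat.factorial k : ℝ) ≠ 0 := by positivity
  have : (k : ℝ) + 1 ≠ 0 := by positivity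
  push_cast
  field_simp
  ring

theorem lagL_neg {N : ℤ} (h : N < 0) (α : ℝ) : lagL N α = fun _ => 0 := by
  funext z; simp [lagL, h]

theorem lagL_nat (n : ℕ) (α z : ℝ) : lagL (n : ℤ) α z =
    ∑ k ∈ Finset.range (n + 1),
      (-1 : ℝ) ^ k * genBinom ((n : ℝ) + α) (n - k) * z ^ k / (Nat.factorial k) := by
  unfold lagL
  rw [if_neg (by omega)]
  simp

theorem lagL_hasDerivAt (N : ℤ) (α z : ℝ) :
    HasDerivAt (lagL N α) (-(lagL (N - 1) (α + 1) z)) z := by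
  rcases lt_or_ge N 0 with h | h
  · rw [lagL_neg h, lagL_neg (by omega)]
    simpa using hasDerivAt_const z (0 : ℝ)
  · lift N to ℕ using h
    have hf : lagL (N : ℤ) α = fun z => ∑ k ∈ Finset.range (N + 1),
      (-1 : ℝ) ^ k * genBinom ((N : ℝ) + α) (N - k) * z ^ k / (Nat.factorial k) := by
      funext z; exact lagL_nat N α z
    have hd : HasDerivAt (lagL (N : ℤ) α) (∑ k ∈ Finset.range (N + 1),
      (-1 : ℝ) ^ k * genBinom ((N : ℝ) + α) (N - k) * ((k : ℝ) * z ^ (k - 1))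
        / (Nat.factorial k)) z := by
      rw [hf]
      apply HasDerivAt.fun_sum
      intro k _
      exact ((hasDerivAt_pow k z).const_mul _).div_const _
    convert hd using 1
    rcases N with _ | N
    · rw [lagL_neg (by simp)]; simp
    · have : (((N + 1 : ℕ) : ℤ) - 1) = (N : ℤ) := by push_cast; ring
      rw [this, lagL_nat, Finset.sum_range_succ' _ (N + 1)]
      simp only [Nat.cast_zero, zero_mul, mul_zero, zero_div, add_zero]
      rw [← Finset.sum_neg_distrib]
      apply Finset.sum_congr rfl
      intro k _
      rw [Nat.factorial_succ]
      have h1 : N + 1 - (k + 1) = N - k := by omega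
      have h2 : (N : ℝ) + (α + 1) = ((N + 1 : ℕ) : ℝ) + α := by push_cast; ring
      rw [h1, h2]
      have : (Nat.factorial k : ℝ) ≠ 0 := by positivity
      have : (k : ℝ) + 1 ≠ 0 := by positivity
      push_cast
      field_simp
      ring

theorem lagL_contig (N : ℤ) (α z : ℝ) :
    lagL N (α + 1) z = lagL N α z + lagL (N - 1) (α + 1) z := by
  rcases lt_or_ge N 0 with h | h
  · rw [lagL_neg h, lagL_neg h, lagL_neg (by omega)]; simp
  · lift N to ℕ using h
    rcases N with _ | N
    · rw [lagL_neg (N := ((0 : ℕ) : ℤ) - 1) (by simp), lagL_nat, lagL_nat]; simp [genBinom_zero]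
    · have : (((N + 1 : ℕ) : ℤ) - 1) = (N : ℤ) := by push_cast; ring
      rw [this, lagL_nat, lagL_nat, lagL_nat, Finset.sum_range_succ _ (N + 1),
        Finset.sum_range_succ _ (N + 1)]
      rw [Nat.sub_self, genBinom_zero, genBinom_zero, add_right_comm, ← Finset.sum_add_distrib]
      congr 1
      apply Finset.sum_congr rfl
      intro k hk
      have hk' : k < N + 1 := Finset.mem_range.mp hk
      have h1 : N + 1 - k = (N - k) + 1 := by omega
      have h2 : ((N + 1 : ℕ) : ℝ) + (α + 1) = (((N + 1 : ℕ) : ℝ) + α) + 1 := by ring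
      have h3 : (N : ℝ) + (α + 1) = ((N + 1 : ℕ) : ℝ) + α := by push_cast; ring
      rw [h1, h2, h3, genBinom_pascal]
      ring

/-- Moments. -/
def mom (N : ℤ) (α : ℝ) (z : ℝ) (i : ℕ) : ℝ := lagL (N - i) (α + i) z

theorem mom_hasDerivAt (N : ℤ) (α z : ℝ) (i : ℕ) :
    HasDerivAt (fun z => mom N α z i) (-(mom N α z (i + 1))) z := by
  have := lagL_hasDerivAt (N - i) (α + i) z
  unfold mom
  convert this using 3
  · push_cast; ring
  · push_cast; ring

theorem mom_shift (N : ℤ) (α z : ℝ) (i : ℕ) : mom (N - 1) (α + 1) z i = mom N α z (i + 1) := by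
  unfold mom
  congr 1 <;> (push_cast; ring)

theorem mom_contig (N : ℤ) (α z : ℝ) (i : ℕ) :
    mom N (α + 1) z i = mom N α z (i + 1) + mom N α z i := by
  have := lagL_contig (N - i) (α + i) z
  unfold mom
  rw [show α + 1 + (i : ℝ) = α + i + 1 by ring, this, add_comm]
  congr 2 <;> (push_cast; ring)

theorem iteratedDeriv_lagL (N : ℤ) (α : ℝ) (i : ℕ) :
    iteratedDeriv i (lagL N α) = fun z => (-1 : ℝ) ^ i * mom N α z i := by
  induction i with
  | zero => funext z; simp [mom]
  | succ i ih =>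
    rw [iteratedDeriv_succ, ih]
    funext z
    rw [((mom_hasDerivAt N α z i).const_mul _).deriv]
    ring

/-- Append a column sequence. -/
def sn {k : ℕ} (u : Fin k → ℕ → ℝ) (a : ℕ → ℝ) : Fin (k + 1) → ℕ → ℝ :=
  Fin.snoc (α := fun _ => ℕ → ℝ) u a

/-- Determinant with given column sequences. -/
def Dt {n : ℕ} (u : Fin n → ℕ → ℝ) : ℝ :=
  Matrix.det (Matrix.of fun i j : Fin n => u j i)

theorem sn_last {k : ℕ} (u : Fin k → ℕ → ℝ) (a : ℕ → ℝ) : sn u a (Fin.last k) = a := by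
  simp [sn]

theorem sn_castSucc {k : ℕ} (u : Fin k → ℕ → ℝ) (a : ℕ → ℝ) (i : Fin k) :
    sn u a i.castSucc = u i := by
  simp [sn]

theorem Dt_congr {n : ℕ} {u v : Fin n → ℕ → ℝ} (h : ∀ j, ∀ i < n, u j i = v j i) :
    Dt u = Dt v := by
  unfold Dt
  congr 1
  ext i j
  exact h j i i.2

/-- Plücker relation. -/
theorem det_plucker {N : ℕ} (A : Matrix (Fin N) (Fin N) ℝ) (p q : Fin N) (hpq : p ≠ q)
    (c d : Fin N → ℝ) :
    A.det * ((A.updateCol p c).updateCol q d).det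
      = (A.updateCol p c).det * (A.updateCol q d).det
        - (A.updateCol q c).det * (A.updateCol p d).det := by
  have h := congrArg (fun v => Matrix.cramer (A.updateCol q d) v p) (Matrix.mulVec_cramer A c)
  rw [Matrix.mulVec_eq_sum, map_sum] at h
  simp only [Finset.sum_apply, map_smul, Pi.smul_apply, op_smul_eq_smul, smul_eq_mul] at h
  simp only [Matrix.cramer_apply] at h
  rw [Finset.sum_eq_add p q hpq] at h
  · have e1 : ((A.updateCol q d).updateCol p (A.transpose p)) = A.updateCol q d := by
      ext i j
      by_cases h1 : j = p
      · subst h1; simp [Matrix.updateCol_apply, hpq]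
      · simp [Matrix.updateCol_apply, h1]
    have e2 : ((A.updateCol q d).updateCol p (A.transpose q)).det = -(A.updateCol p d).det := by
      have : ((A.updateCol q d).updateCol p (A.transpose q))
          = (A.updateCol p d).submatrix id (Equiv.swap p q) := by
        ext i j
        by_cases h1 : j = p
        · subst h1; simp [Matrix.updateCol_apply, hpq.symm]
        · by_cases h2 : j = q
          · subst h2; simp [Matrix.updateCol_apply, hpq.symm]
          · simp [Matrix.updateCol_apply, h1, h2, Equiv.swap_apply_of_ne_of_ne h1 h2]
      rw [this, Matrix.det_permute', Equiv.Perm.sign_swap hpq]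
      simp
    have e3 : ((A.updateCol q d).updateCol p c) = (A.updateCol p c).updateCol q d := by
      ext i j
      by_cases h1 : j = p
      · subst h1; simp [Matrix.updateCol_apply, hpq]
      · simp [Matrix.updateCol_apply, h1]
    rw [e1, e2, e3] at h
    linarith
  · intro i _ hi
    have : ((A.updateCol q d).updateCol p (A.transpose i)).det = 0 := by
      apply Matrix.det_zero_of_column_eq (i := p) (j := i) hi.1.symm
      intro k
      simp [Matrix.updateCol_apply, hi.1, hi.2]
    rw [this, mul_zero]
  · simp
  · simp

theorem Dt_plucker {k : ℕ} (u : Fin k → ℕ → ℝ) (a b c d : ℕ → ℝ) :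
    Dt (sn (sn u a) b) * Dt (sn (sn u c) d)
      = Dt (sn (sn u c) b) * Dt (sn (sn u a) d) - Dt (sn (sn u a) c) * Dt (sn (sn u d) b) := by
  have key : ∀ (a b x : ℕ → ℝ),
      (Matrix.of fun i j : Fin (k + 2) => sn (sn u x) b j i)
        = (Matrix.of fun i j : Fin (k + 2) => sn (sn u a) b j i).updateCol
          (Fin.last k).castSucc (fun i => x i) := by
    intro a b x
    ext i j
    refine Fin.lastCases ?_ (fun j => ?_) j
    · simp [Matrix.updateCol_apply, sn_last, Fin.ext_iff]
    · refine Fin.lastCases ?_ (fun j => ?_) j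
      · simp [Matrix.updateCol_apply, sn_last, sn_castSucc]
      · have : (j : ℕ) ≠ k := j.2.ne
        simp [Matrix.updateCol_apply, sn_castSucc, Fin.ext_iff, this]
  have key2 : ∀ (a b x : ℕ → ℝ),
      (Matrix.of fun i j : Fin (k + 2) => sn (sn u a) x j i)
        = (Matrix.of fun i j : Fin (k + 2) => sn (sn u a) b j i).updateCol
          (Fin.last (k + 1)) (fun i => x i) := by
    intro a b x
    ext i j
    refine Fin.lastCases ?_ (fun j => ?_) j
    · simp [Matrix.updateCol_apply, sn_last]
    · have : (j : ℕ) ≠ k + 1 := j.2.ne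
      simp [Matrix.updateCol_apply, sn_castSucc, Fin.ext_iff, this]
  have h := det_plucker (Matrix.of fun i j : Fin (k + 2) => sn (sn u a) b j i)
    (Fin.last k).castSucc (Fin.last (k + 1)) (by simp [Fin.ext_iff]) (fun i => c i) (fun i => d i)
  rw [← key a b c, ← key2 c b d, ← key2 a b d, ← key2 a b c, ← key a b d] at h
  exact h

theorem Dt_swap {k : ℕ} (u : Fin k → ℕ → ℝ) (a b : ℕ → ℝ) :
    Dt (sn (sn u a) b) = - Dt (sn (sn u b) a) := by
  have : (Matrix.of fun i j : Fin (k + 2) => sn (sn u a) b j i)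
      = (Matrix.of fun i j : Fin (k + 2) => sn (sn u b) a j i).submatrix id
        (Equiv.swap (Fin.last k).castSucc (Fin.last (k + 1))) := by
    ext i j
    refine Fin.lastCases ?_ (fun j => ?_) j
    · simp [sn_last, sn_castSucc]
    · refine Fin.lastCases ?_ (fun j => ?_) j
      · simp [sn_last, sn_castSucc]
      · rw [Matrix.submatrix_apply, Equiv.swap_apply_of_ne_of_ne]
        · simp [sn_castSucc]
        · have : (j : ℕ) ≠ k := j.2.ne
          simp [Fin.ext_iff, this]
        · have : (j : ℕ) ≠ k + 1 := by omega
          simp [Fin.ext_iff, this]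
  unfold Dt
  rw [this, Matrix.det_permute', Equiv.Perm.sign_swap (by simp [Fin.ext_iff])]
  simp

theorem Dt_rotate {k : ℕ} (u : Fin k → ℕ → ℝ) (a : ℕ → ℝ) :
    Dt (sn u a) = (-1) ^ k * Dt (Fin.cons (α := fun _ => ℕ → ℝ) a u) := by
  have : (Matrix.of fun i j : Fin (k + 1) => sn u a j i)
      = (Matrix.of fun i j : Fin (k + 1) =>
          (Fin.cons (α := fun _ => ℕ → ℝ) a u : Fin (k + 1) → ℕ → ℝ) j i).submatrix id
        (finRotate (k + 1)) := by
    ext i j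
    simp only [Matrix.of_apply, Matrix.submatrix_apply, id]
    unfold sn
    rw [Fin.snoc_eq_cons_rotate]
  unfold Dt
  rw [this, Matrix.det_permute', sign_finRotate]
  simp

/-- Leading coefficient functional. -/
theorem Dt_top {n : ℕ} (u : Fin n → ℕ → ℝ) :
    Dt (sn u (fun i => if i = n then 1 else 0)) = Dt u := by
  unfold Dt
  rw [Matrix.det_succ_column _ (Fin.last n), Finset.sum_eq_single (Fin.last n)]
  · simp only [Matrix.of_apply, sn_last, Fin.val_last, if_true, ← two_mul, pow_mul]
    simp only [neg_one_sq, one_pow, one_mul, Fin.succAbove_last]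
    congr 1
    ext i j
    simp [sn_castSucc]
  · intro i _ hi
    have : (i : ℕ) ≠ n := fun h => hi (Fin.ext h)
    simp [sn_last, this]
  · simp

/-- Evaluation functional. -/
theorem Dt_eval {n : ℕ} (u : Fin n → ℕ → ℝ) (x : ℝ) :
    Dt (sn u (fun i => x ^ i)) = (-1) ^ n * Dt (fun j i => u j (i + 1) - x * u j i) := by
  let v := sn u (fun i => x ^ i)
  let B : Matrix (Fin (n + 1)) (Fin (n + 1)) ℝ := Matrix.of fun i j =>
    if (i : ℕ) = 0 then v j 0 else v j i - x * v j (i - 1)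
  have h : Dt v = B.det := by
    unfold Dt
    apply Matrix.det_eq_of_forall_row_eq_smul_add_pred (fun _ => x)
    · intro j; simp [B]
    · intro i j; simp [B]
  change Dt v = _
  rw [h, Matrix.det_succ_column _ (Fin.last n), Finset.sum_eq_single 0]
  · simp only [B, Matrix.of_apply, v, sn_last, Fin.val_last, Fin.val_zero, if_true, zero_add,
      pow_zero, mul_one, Fin.succAbove_last, Fin.succAbove_zero]
    unfold Dt
    congr 2
    ext i j
    simp [sn_castSucc]
  · intro i _ hi
    have : (i : ℕ) ≠ 0 := fun h => hi (Fin.ext h)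
    obtain ⟨k, hk⟩ := Nat.exists_eq_succ_of_ne_zero this
    simp [B, v, sn_last, hk, hi, pow_succ, mul_comm]
  · simp

theorem Dt_smul_last {n : ℕ} (u : Fin n → ℕ → ℝ) (r : ℝ) (a : ℕ → ℝ) :
    Dt (sn u (fun i => r * a i)) = r * Dt (sn u a) := by
  unfold Dt
  rw [Matrix.det_succ_column _ (Fin.last n), Matrix.det_succ_column _ (Fin.last n), Finset.mul_sum]
  apply Finset.sum_congr rfl
  intro i _
  simp only [Matrix.of_apply, sn_last, Fin.succAbove_last]
  have : ∀ w : ℕ → ℝ, (Matrix.of fun (i j : Fin (n + 1)) => sn u w j i).submatrix i.succAbove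
      Fin.castSucc = Matrix.of fun a b => u b (i.succAbove a) := by
    intro w; ext a b; simp [sn_castSucc]
  rw [this, this]
  ring

theorem sn_map {n : ℕ} (u : Fin n → ℕ → ℝ) (a : ℕ → ℝ) (x : ℝ) :
    (fun j i => sn u a j (i + 1) - x * sn u a j i)
      = sn (fun j i => u j (i + 1) - x * u j i) (fun i => a (i + 1) - x * a i) := by
  funext j i
  refine Fin.lastCases ?_ (fun j => ?_) j
  · simp [sn_last]
  · simp [sn_castSucc]

theorem Dt_top_eval {n : ℕ} (u : Fin n → ℕ → ℝ) (x : ℝ) :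
    Dt (sn (sn u (fun i => if i = n + 1 then 1 else 0)) (fun i => x ^ i))
      = (-1) ^ (n + 1) * Dt (fun j i => u j (i + 1) - x * u j i) := by
  rw [Dt_eval, sn_map]
  congr 1
  rw [← Dt_top (fun j i => u j (i + 1) - x * u j i)]
  apply Dt_congr
  intro j i hi
  refine Fin.lastCases ?_ (fun j => ?_) j
  · have : i ≠ n + 1 := hi.ne
    simp [sn_last, this]
  · simp [sn_castSucc]

theorem Dt_eval_eval {n : ℕ} (u : Fin n → ℕ → ℝ) (x y : ℝ) :
    Dt (sn (sn u (fun i => y ^ i)) (fun i => x ^ i))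
      = (x - y) * Dt (fun j i => (u j (i + 2) - x * u j (i + 1))
          - y * (u j (i + 1) - x * u j i)) := by
  rw [Dt_eval, sn_map]
  have : (fun i => y ^ (i + 1) - x * y ^ i) = (fun i => (y - x) * y ^ i) := by
    funext i; ring
  rw [this, Dt_smul_last, Dt_eval]
  have : ((-1 : ℝ)) ^ n * (-1) ^ n = 1 := by rw [← mul_pow]; simp
  rw [pow_succ]
  linear_combination ((x - y) * Dt (fun j i => (u j (i + 2) - x * u j (i + 1))
          - y * (u j (i + 1) - x * u j i))) * this

/-- First Hankel columns. -/
def hbase (c : ℕ → ℝ) (k : ℕ) : Fin k → ℕ → ℝ := fun j i => c (i + j)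

/-- Hankel determinant. -/
def Hk (c : ℕ → ℝ) (n : ℕ) : ℝ := Dt (hbase c n)

/-- Hankel determinant of size `k + 1` with last column shifted. -/
def Hd (c : ℕ → ℝ) (k : ℕ) : ℝ := Dt (sn (hbase c k) (fun i => c (i + (k + 1))))

/-- Weight shift. -/
def Sh (x : ℝ) (c : ℕ → ℝ) : ℕ → ℝ := fun i => c (i + 1) - x * c i

theorem hbase_succ (c : ℕ → ℝ) (k : ℕ) :
    hbase c (k + 1) = sn (hbase c k) (fun i => c (i + k)) := by
  funext j i
  refine Fin.lastCases ?_ (fun j => ?_) j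
  · simp [sn_last, hbase]
  · simp [sn_castSucc, hbase]

theorem Hk_succ (c : ℕ → ℝ) (k : ℕ) :
    Hk c (k + 1) = Dt (sn (hbase c k) (fun i => c (i + k))) := by
  rw [Hk, hbase_succ]

theorem Hk_succ2 (c : ℕ → ℝ) (k : ℕ) :
    Hk c (k + 2) = Dt (sn (sn (hbase c k) (fun i => c (i + k))) (fun i => c (i + (k + 1)))) := by
  rw [Hk, hbase_succ, hbase_succ]

theorem Hk_zero (c : ℕ → ℝ) : Hk c 0 = 1 := by
  simp [Hk, Dt]

theorem hbase_Sh (c : ℕ → ℝ) (x : ℝ) (k : ℕ) :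
    (fun (j : Fin k) i => hbase c k j (i + 1) - x * hbase c k j i) = hbase (Sh x c) k := by
  funext j i
  simp only [hbase, Sh]
  rw [add_right_comm]

theorem Sh_col (c : ℕ → ℝ) (x : ℝ) (l : ℕ) :
    (fun i => c (i + 1 + l) - x * c (i + l)) = fun i => Sh x c (i + l) := by
  funext i
  simp only [Sh]
  rw [add_right_comm]

theorem Hk_eval (c : ℕ → ℝ) (x : ℝ) (k : ℕ) :
    Dt (sn (sn (hbase c k) (fun i => c (i + k))) (fun i => x ^ i))
      = (-1) ^ (k + 1) * Hk (Sh x c) (k + 1) := by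
  rw [Dt_eval, sn_map, hbase_Sh, Sh_col, Hk_succ]

theorem Hd_eval (c : ℕ → ℝ) (x : ℝ) (k : ℕ) :
    Dt (sn (sn (hbase c k) (fun i => c (i + (k + 1)))) (fun i => x ^ i))
      = (-1) ^ (k + 1) * Hd (Sh x c) k := by
  rw [Dt_eval, sn_map, hbase_Sh, Sh_col, Hd]

theorem Hk_top_eval (c : ℕ → ℝ) (x : ℝ) (k : ℕ) :
    Dt (sn (sn (hbase c k) (fun i => if i = k + 1 then 1 else 0)) (fun i => x ^ i))
      = (-1) ^ (k + 1) * Hk (Sh x c) k := by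
  rw [Dt_top_eval, hbase_Sh, Hk]

theorem Hk_eval_eval (c : ℕ → ℝ) (x y : ℝ) (k : ℕ) :
    Dt (sn (sn (hbase c k) (fun i => y ^ i)) (fun i => x ^ i))
      = (x - y) * Hk (Sh y (Sh x c)) k := by
  rw [Dt_eval_eval, Hk]
  congr 2
  funext j i
  simp only [hbase, Sh]
  congr 2 <;> ring_nf

theorem neg_one_sq_pow (k : ℕ) : ((-1 : ℝ)) ^ k * (-1) ^ k = 1 := by
  rw [← mul_pow]; simp

theorem alg45 (c : ℕ → ℝ) (x : ℝ) (k : ℕ) :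
    Hk (Sh x c) k * Hk c (k + 2) = Hk c (k + 1) * Hd (Sh x c) k - Hd c k * Hk (Sh x c) (k + 1) := by
  have h := Dt_plucker (hbase c k) (fun i => c (i + k)) (fun i => c (i + (k + 1)))
    (fun i => if i = k + 1 then 1 else 0) (fun i => x ^ i)
  rw [Dt_swap _ (fun i => if i = k + 1 then (1 : ℝ) else 0) (fun i => c (i + (k + 1))),
    Dt_swap _ (fun i => x ^ i) (fun i => c (i + (k + 1)))] at h
  rw [← Hk_succ2, Hk_top_eval, Dt_top, Dt_top, Hk_eval, Hd_eval, ← Hd, ← Hk_succ] at h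
  rcases neg_one_pow_eq_or ℝ (k + 1) with h1 | h1 <;> rw [h1] at h <;> linarith

theorem alg6 (c : ℕ → ℝ) (x y : ℝ) (k : ℕ) :
    (x - y) * (Hk (Sh y (Sh x c)) k * Hk c (k + 2))
      = Hk (Sh y c) (k + 1) * Hd (Sh x c) k - Hd (Sh y c) k * Hk (Sh x c) (k + 1) := by
  have h := Dt_plucker (hbase c k) (fun i => c (i + k)) (fun i => c (i + (k + 1)))
    (fun i => y ^ i) (fun i => x ^ i)
  rw [Dt_swap _ (fun i => y ^ i) (fun i => c (i + (k + 1))),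
    Dt_swap _ (fun i => x ^ i) (fun i => c (i + (k + 1)))] at h
  rw [← Hk_succ2, Hk_eval_eval, Hk_eval, Hd_eval, Hk_eval, Hd_eval] at h
  rcases neg_one_pow_eq_or ℝ (k + 1) with h1 | h1 <;> rw [h1] at h <;> linarith

theorem alg7 (c : ℕ → ℝ) (x y : ℝ) (k : ℕ) :
    (x - y) * (Hk c (k + 1) * Hk (Sh y (Sh x c)) k)
      = Hk (Sh y c) (k + 1) * Hk (Sh x c) k - Hk (Sh x c) (k + 1) * Hk (Sh y c) k := by
  have h := Dt_plucker (hbase c k) (fun i => c (i + k)) (fun i => if i = k + 1 then 1 else 0)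
    (fun i => y ^ i) (fun i => x ^ i)
  rw [Dt_swap _ (fun i => y ^ i) (fun i => if i = k + 1 then (1 : ℝ) else 0),
    Dt_swap _ (fun i => x ^ i) (fun i => if i = k + 1 then (1 : ℝ) else 0)] at h
  rw [Dt_top, ← Hk_succ, Hk_eval_eval, Hk_eval, Hk_eval, Hk_top_eval, Hk_top_eval] at h
  rcases neg_one_pow_eq_or ℝ (k + 1) with h1 | h1 <;> rw [h1] at h <;> linarith

theorem cons_hbase (c : ℕ → ℝ) (k : ℕ) :
    Fin.cons (α := fun _ => ℕ → ℝ) c (hbase (Sh 0 c) k) = hbase c (k + 1) := by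
  funext j i
  refine Fin.cases ?_ (fun j => ?_) j
  · simp [hbase]
  · simp [hbase, Sh, add_assoc]

theorem cons_hbase' (c : ℕ → ℝ) (k : ℕ) :
    Fin.cons (α := fun _ => ℕ → ℝ) c (sn (hbase (Sh 0 c) k) (fun i => Sh 0 c (i + (k + 1))))
      = sn (hbase c (k + 1)) (fun i => c (i + (k + 2))) := by
  rw [← cons_hbase]
  unfold sn
  rw [Fin.cons_snoc_eq_snoc_cons]
  congr 1
  funext i
  simp [Sh, add_assoc]

theorem alg123 (c : ℕ → ℝ) (l : ℕ) (θ : ℕ → ℝ) (σ : ℝ) (hσ : σ ≠ 0) (T : (ℕ → ℝ) → ℕ → ℝ)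
    (hT : ∀ (v : Fin (l + 1) → ℕ → ℝ), Dt (sn v θ) = σ * Dt (fun j => T (v j)))
    (hs : ∀ (c : ℕ → ℝ) (j : ℕ), T (fun i => c (i + j)) = fun i => T c (i + j)) :
    Hk (T c) (l + 1) * Hk (Sh 0 c) (l + 2)
      = Hk (T (Sh 0 c)) (l + 1) * Hd c (l + 1) - Hd (T (Sh 0 c)) l * Hk c (l + 2) := by
  have hb : ∀ (c a : ℕ → ℝ), (fun j => T (sn (hbase c l) a j)) = sn (hbase (T c) l) (T a) := by
    intro c a
    funext j
    refine Fin.lastCases ?_ (fun j => ?_) j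
    · simp [sn_last]
    · simp only [sn_castSucc]
      exact hs c j
  have h := Dt_plucker (hbase (Sh 0 c) l) c (fun i => Sh 0 c (i + l))
    (fun i => Sh 0 c (i + (l + 1))) θ
  rw [Dt_swap _ c (fun i => Sh 0 c (i + l)), Dt_swap _ c (fun i => Sh 0 c (i + (l + 1))),
    Dt_swap _ (fun i => Sh 0 c (i + (l + 1))) (fun i => Sh 0 c (i + l)), ← Hk_succ2,
    Dt_swap _ θ (fun i => Sh 0 c (i + l)), hT, hT, hT, hb, hb, hb, hs, hs, ← Hk_succ, ← Hd,
    Dt_rotate (sn (hbase (Sh 0 c) l) (fun i => Sh 0 c (i + l))),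
    Dt_rotate (sn (hbase (Sh 0 c) l) (fun i => Sh 0 c (i + (l + 1)))),
    ← hbase_succ, cons_hbase, cons_hbase', ← Hd, ← Hk] at h
  have e : Dt (sn (hbase (T (Sh 0 c)) l) (T c)) = (-1) ^ l * Hk (T c) (l + 1) := by
    rw [Dt_rotate, Hk, ← cons_hbase]
    have : T (Sh 0 c) = Sh 0 (T c) := by
      have := hs c 1
      have h0 : ∀ c, Sh 0 c = fun i => c (i + 1) := by intro c; funext i; simp [Sh]
      rw [h0, h0, this]
    rw [this]
  rw [e, pow_succ] at h
  apply mul_left_cancel₀ hσ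
  rcases neg_one_pow_eq_or ℝ l with h1 | h1 <;> rw [h1] at h <;> linarith

theorem alg1 (c : ℕ → ℝ) (l : ℕ) :
    Hk c (l + 1) * Hk (Sh 0 c) (l + 2)
      = Hk (Sh 0 c) (l + 1) * Hd c (l + 1) - Hd (Sh 0 c) l * Hk c (l + 2) :=
  alg123 c l (fun i => if i = l + 1 then 1 else 0) 1 one_ne_zero (fun c => c)
    (fun v => by rw [Dt_top, one_mul]) (fun _ _ => rfl)

theorem alg23 (c : ℕ → ℝ) (x : ℝ) (l : ℕ) :
    Hk (Sh x c) (l + 1) * Hk (Sh 0 c) (l + 2)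
      = Hk (Sh x (Sh 0 c)) (l + 1) * Hd c (l + 1) - Hd (Sh x (Sh 0 c)) l * Hk c (l + 2) :=
  alg123 c l (fun i => x ^ i) ((-1) ^ (l + 1)) (by simp) (Sh x)
    (fun v => Dt_eval v x) (fun c j => by rw [← Sh_col]; rfl)

theorem hasDerivAt_det {n : ℕ} (A : ℝ → Matrix (Fin n) (Fin n) ℝ) (A' : Matrix (Fin n) (Fin n) ℝ)
    (z : ℝ) (h : ∀ i j, HasDerivAt (fun z => A z i j) (A' i j) z) :
    HasDerivAt (fun z => (A z).det) (∑ j, ((A z).updateCol j (fun i => A' i j)).det) z := by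
  simp only [Matrix.det_apply]
  rw [Finset.sum_comm]
  apply HasDerivAt.fun_sum
  intro σ _
  rw [← Finset.smul_sum]
  apply HasDerivAt.const_smul
  have := HasDerivAt.fun_finsetProd (u := Finset.univ) (f := fun i z => A z (σ i) i)
    (f' := fun i => A' (σ i) i) (x := z) (fun i _ => h (σ i) i)
  refine this.congr_deriv ?_
  apply Finset.sum_congr rfl
  intro j _
  rw [← Finset.prod_erase_mul _ _ (Finset.mem_univ j), smul_eq_mul]
  symm
  congr 1
  · apply Finset.prod_congr rfl
    intro i hi
    simp [Matrix.updateCol_apply, Finset.ne_of_mem_erase hi]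
  · simp [Matrix.updateCol_apply]

theorem Hk_hasDerivAt (c : ℝ → ℕ → ℝ) (z : ℝ)
    (h : ∀ i, HasDerivAt (fun z => c z i) (-(c z (i + 1))) z) (k : ℕ) :
    HasDerivAt (fun z => Hk (c z) (k + 1)) (-(Hd (c z) k)) z := by
  have := hasDerivAt_det (fun z => Matrix.of fun i j : Fin (k + 1) => c z (i + j))
    (Matrix.of fun i j : Fin (k + 1) => -(c z (i + j + 1))) z (fun i j => h (i + j))
  refine this.congr_deriv ?_
  rw [Fin.sum_univ_castSucc, Finset.sum_eq_zero, zero_add]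
  · have e : (fun i : Fin (k + 1) => (Matrix.of fun i j : Fin (k + 1) => -(c z (i + j + 1))) i
        (Fin.last k)) = (-1 : ℝ) • fun i : Fin (k + 1) => c z (i + k + 1) := by
      funext i; simp
    rw [e, Matrix.det_updateCol_smul, neg_one_mul, Hd, Dt]
    congr 2
    ext i j
    refine Fin.lastCases ?_ (fun j => ?_) j
    · simp [sn_last, add_assoc]
    · have : (j : ℕ) ≠ k := j.2.ne
      simp [sn_castSucc, Matrix.updateCol_apply, Fin.ext_iff, this, hbase]
  · intro j _
    have e : (fun i : Fin (k + 1) => (Matrix.of fun i j : Fin (k + 1) => -(c z (i + j + 1))) i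
        j.castSucc) = (-1 : ℝ) • fun i : Fin (k + 1) => c z (i + j + 1) := by
      funext i; simp
    rw [e, Matrix.det_updateCol_smul]
    have : (Matrix.updateCol (Matrix.of fun i j : Fin (k + 1) => c z (i + j)) j.castSucc
        (fun i : Fin (k + 1) => c z (i + j + 1))).det = 0 := by
      apply Matrix.det_zero_of_column_eq (i := j.castSucc) (j := j.succ) (by simp [Fin.ext_iff])
      intro i
      simp [Matrix.updateCol_apply, Fin.ext_iff, add_assoc]
    rw [this, mul_zero]

theorem genLag_eq (m : ℤ) (n : ℕ) (μ : ℝ) :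
    genLag m n μ = fun z => Hk (mom (m + n) (μ + 1) z) n := by
  funext z
  unfold genLag
  simp only [iteratedDeriv_lagL]
  have e : (Matrix.of fun j k : Fin n =>
      (-1 : ℝ) ^ ((j : ℕ) + (k : ℕ)) * mom (m + n) (μ + 1) z ((j : ℕ) + (k : ℕ)))
      = Matrix.of fun j k : Fin n => (-1 : ℝ) ^ (j : ℕ) *
        (Matrix.of fun j k : Fin n => (-1 : ℝ) ^ (k : ℕ) *
          (Matrix.of fun j k : Fin n => mom (m + n) (μ + 1) z ((j : ℕ) + (k : ℕ))) j k) j k := by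
    ext j k
    simp only [Matrix.of_apply]
    rw [pow_add]; ring
  rw [e, Matrix.det_mul_column (fun j : Fin n => (-1 : ℝ) ^ (j : ℕ)),
    Matrix.det_mul_row (fun j : Fin n => (-1 : ℝ) ^ (j : ℕ)), ← mul_assoc,
    ← Finset.prod_mul_distrib]
  simp only [neg_one_sq_pow, Finset.prod_const_one, one_mul]
  rfl

theorem mom0 {N N' : ℤ} {α α' : ℝ} (z : ℝ) (hN : N' = N - 1) (hα : α' = α + 1) :
    mom N' α' z = Sh 0 (mom N α z) := by
  subst hN hα
  funext i
  rw [mom_shift, Sh]; ring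

theorem mom1 {N N' : ℤ} {α α' : ℝ} (z : ℝ) (hN : N' = N) (hα : α' = α + 1) :
    mom N' α' z = Sh (-1) (mom N α z) := by
  subst hN hα
  funext i
  rw [mom_contig, Sh]; ring

theorem deriv_genLag_succ (m : ℤ) (k : ℕ) (μ z : ℝ) :
    deriv (genLag m (k + 1) μ) z = -(Hd (mom (m + (k + 1 : ℕ)) (μ + 1) z) k) := by
  rw [genLag_eq]
  exact (Hk_hasDerivAt _ z (fun i => mom_hasDerivAt _ _ z i) k).deriv

theorem deriv_genLag_zero (m : ℤ) (μ z : ℝ) : deriv (genLag m 0 μ) z = 0 := by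
  rw [genLag_eq]
  simp [Hk_zero]

theorem Hd_zero (c : ℕ → ℝ) : Hd c 0 = Hk (Sh 0 c) 1 := by
  simp [Hd, Hk, Dt, hbase, Sh, sn, Fin.snoc]

theorem tau_alg (c a b d : ℕ → ℝ) (k : ℕ)
    (h : ∀ l, k = l + 1 → Hk a (l + 1) * Hk b (l + 2)
      = Hk d (l + 1) * Hd c (l + 1) - Hd d l * Hk c (l + 2)) (hb : b = Sh 0 c)
    (D : ℝ) (hD0 : k = 0 → D = 0) (hD : ∀ l, k = l + 1 → D = -(Hd d l)) :
    D * Hk c (k + 1) - Hk d k * -(Hd c k) = Hk a k * Hk b (k + 1) := by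
  rcases k with _ | l
  · rw [hD0 rfl, hb, Hk_zero, Hk_zero, Hd_zero]; ring
  · rw [hD l rfl, h l rfl]; ring

theorem hirota_123 (m1 m2 m3 m4 : ℤ) (μ1 μ2 μ3 μ4 z : ℝ) (k : ℕ)
    (c a b d : ℕ → ℝ)
    (h1 : mom (m1 + k) (μ1 + 1) z = d) (h2 : mom (m2 + (k + 1 : ℕ)) (μ2 + 1) z = c)
    (h3 : mom (m3 + k) (μ3 + 1) z = a) (h4 : mom (m4 + (k + 1 : ℕ)) (μ4 + 1) z = b)
    (h : ∀ l, k = l + 1 → Hk a (l + 1) * Hk b (l + 2)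
      = Hk d (l + 1) * Hd c (l + 1) - Hd d l * Hk c (l + 2)) (hb : b = Sh 0 c) :
    hirota (genLag m1 k μ1) (genLag m2 (k + 1) μ2) z
      = genLag m3 k μ3 z * genLag m4 (k + 1) μ4 z := by
  have := tau_alg c a b d k h hb (deriv (genLag m1 k μ1) z)
    (by rintro rfl; exact deriv_genLag_zero _ _ _)
    (by rintro l rfl; rw [← h1]; exact deriv_genLag_succ _ _ _ _)
  rw [hirota, deriv_genLag_succ, h2]
  simp only [genLag_eq m2, genLag_eq m3, genLag_eq m4, h2, h3, h4]
  rw [← this]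
  congr 2
  rw [genLag_eq, ← h1]

theorem hirota_456 (m1 m2 m3 m4 : ℤ) (μ1 μ2 μ3 μ4 z : ℝ) (k : ℕ)
    (c a b d : ℕ → ℝ)
    (h1 : mom (m1 + (k + 1 : ℕ)) (μ1 + 1) z = a) (h2 : mom (m2 + (k + 1 : ℕ)) (μ2 + 1) z = b)
    (h3 : mom (m3 + k) (μ3 + 1) z = d) (h4 : mom (m4 + (k + 1 + 1 : ℕ)) (μ4 + 1) z = c)
    (h : Hk d k * Hk c (k + 2) = Hk a (k + 1) * Hd b k - Hd a k * Hk b (k + 1)) :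
    hirota (genLag m1 (k + 1) μ1) (genLag m2 (k + 1) μ2) z
      = genLag m3 k μ3 z * genLag m4 (k + 1 + 1) μ4 z := by
  rw [hirota, deriv_genLag_succ, deriv_genLag_succ, h1, h2]
  simp only [genLag_eq, h1, h2, h3, h4, h]
  ring


/-- Hirota bilinear equations and a discrete bilinear equation. -/
theorem genLag_hirota_equations (m n : ℕ) (hm : 1 ≤ m) (hn : 1 ≤ n) (μ : ℝ) (z : ℝ) :
    hirota (genLag (m : ℤ) (n - 1) (μ + 1)) (genLag (m : ℤ) n μ) z
        = genLag ((m : ℤ) + 1) (n - 1) μ z * genLag ((m : ℤ) - 1) n (μ + 1) z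
      ∧ hirota (genLag (m : ℤ) (n - 1) (μ + 1)) (genLag ((m : ℤ) + 1) n (μ - 1)) z
        = genLag ((m : ℤ) + 1) (n - 1) μ z * genLag (m : ℤ) n μ z
      ∧ hirota (genLag (m : ℤ) (n - 1) (μ + 1)) (genLag (m : ℤ) n (μ - 1)) z
        = genLag ((m : ℤ) + 1) (n - 1) μ z * genLag ((m : ℤ) - 1) n μ z
      ∧ hirota (genLag ((m : ℤ) + 1) n μ) (genLag (m : ℤ) n (μ + 1)) z
        = genLag ((m : ℤ) + 1) (n - 1) (μ + 1) z * genLag (m : ℤ) (n + 1) μ z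
      ∧ hirota (genLag (m : ℤ) n μ) (genLag (m : ℤ) n (μ + 1)) z
        = genLag ((m : ℤ) + 1) (n - 1) (μ + 1) z * genLag ((m : ℤ) - 1) (n + 1) μ z
      ∧ hirota (genLag ((m : ℤ) + 1) n μ) (genLag (m : ℤ) n μ) z
        = genLag ((m : ℤ) + 1) (n - 1) (μ + 1) z * genLag (m : ℤ) (n + 1) (μ - 1) z
      ∧ genLag (m : ℤ) n μ z * genLag (m : ℤ) (n - 1) μ z
          - genLag ((m : ℤ) - 1) n μ z * genLag ((m : ℤ) + 1) (n - 1) μ z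
        = genLag (m : ℤ) n (μ - 1) z * genLag (m : ℤ) (n - 1) (μ + 1) z := by
  obtain ⟨k, rfl⟩ : ∃ k, n = k + 1 := ⟨n - 1, by omega⟩
  rw [Nat.add_sub_cancel]
  refine ⟨?_, ?_, ?_, ?_, ?_, ?_, ?_⟩
  · let c := mom ((m : ℤ) + (k + 1 : ℕ)) (μ + 1) z
    refine hirota_123 _ _ _ _ _ _ _ _ _ k c c (Sh 0 c) (Sh 0 c) ?_ rfl ?_ ?_
      (fun l _ => alg1 c l) rfl
    · exact mom0 z (by push_cast; ring) (by ring)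
    · simp only [c]; congr 1; push_cast; ring
    · exact mom0 z (by push_cast; ring) (by ring)
  · let c := mom ((m : ℤ) + 1 + (k + 1 : ℕ)) (μ - 1 + 1) z
    have e : mom ((m : ℤ) + (k + 1 : ℕ)) (μ + 1) z = Sh 0 c :=
      mom0 z (by push_cast; ring) (by ring)
    refine hirota_123 _ _ _ _ _ _ _ _ _ k c (Sh 0 c) (Sh 0 c) (Sh 0 (Sh 0 c)) ?_ rfl ?_ e
      (fun l _ => alg23 c 0 l) rfl
    · rw [← e]; exact mom0 z (by push_cast; ring) (by ring)
    · rw [← e]; congr 1; push_cast; ring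
  · let c := mom ((m : ℤ) + (k + 1 : ℕ)) (μ - 1 + 1) z
    have e : mom ((m : ℤ) - 1 + (k + 1 : ℕ)) (μ + 1) z = Sh 0 c :=
      mom0 z (by push_cast; ring) (by ring)
    refine hirota_123 _ _ _ _ _ _ _ _ _ k c (Sh (-1) c) (Sh 0 c) (Sh (-1) (Sh 0 c)) ?_ rfl ?_ e
      (fun l _ => alg23 c (-1) l) rfl
    · rw [← e]; exact mom1 z (by push_cast; ring) (by ring)
    · exact mom1 z (by push_cast; ring) (by ring)
  · let c := mom ((m : ℤ) + 1 + (k + 1 : ℕ)) (μ + 1) z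
    refine hirota_456 _ _ _ _ _ _ _ _ _ k c c (Sh 0 c) (Sh 0 c) rfl ?_ ?_ ?_ (alg45 c 0 k)
    · exact mom0 z (by push_cast; ring) (by ring)
    · exact mom0 z (by push_cast; ring) (by ring)
    · simp only [c]; congr 1; push_cast; ring
  · let c := mom ((m : ℤ) + (k + 1 : ℕ)) (μ + 1) z
    refine hirota_456 _ _ _ _ _ _ _ _ _ k c c (Sh (-1) c) (Sh (-1) c) rfl ?_ ?_ ?_
      (alg45 c (-1) k)
    · exact mom1 z (by push_cast; ring) (by ring)
    · exact mom1 z (by push_cast; ring) (by ring)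
    · simp only [c]; congr 1; push_cast; ring
  · let c := mom ((m : ℤ) + (k + 1 + 1 : ℕ)) (μ - 1 + 1) z
    have e : mom ((m : ℤ) + (k + 1 : ℕ)) (μ + 1) z = Sh 0 c :=
      mom0 z (by push_cast; ring) (by ring)
    refine hirota_456 _ _ _ _ _ _ _ _ _ k c (Sh (-1) c) (Sh 0 c) (Sh (-1) (Sh 0 c)) ?_ e ?_ rfl ?_
    · exact mom1 z (by push_cast; ring) (by ring)
    · rw [← e]; exact mom1 z (by push_cast; ring) (by ring)
    · have := alg6 c 0 (-1) k
      linarith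
  · let c := mom ((m : ℤ) + (k + 1 : ℕ)) (μ - 1 + 1) z
    have e1 : mom ((m : ℤ) + (k + 1 : ℕ)) (μ + 1) z = Sh (-1) c :=
      mom1 z (by push_cast; ring) (by ring)
    have e2 : mom ((m : ℤ) + k) (μ + 1) z = Sh 0 c :=
      mom0 z (by push_cast; ring) (by ring)
    have e3 : mom ((m : ℤ) - 1 + (k + 1 : ℕ)) (μ + 1) z = Sh 0 c :=
      mom0 z (by push_cast; ring) (by ring)
    have e4 : mom ((m : ℤ) + 1 + k) (μ + 1) z = Sh (-1) c :=
      mom1 z (by push_cast; ring) (by ring)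
    have e5 : mom ((m : ℤ) + k) (μ + 1 + 1) z = Sh (-1) (Sh 0 c) := by
      rw [← e2]; exact mom1 z (by push_cast; ring) (by ring)
    have := alg7 c 0 (-1) k
    simp only [genLag_eq, e1, e2, e3, e4, e5]
    change _ = Hk c (k + 1) * _
    linarith
end
end

section
/- Let m ≥ 1, n ≥ 1 be integers and μ ∈ ℝ with m+μ+2n+1 ≠ 0. Define τ_{m,n}^{(μ)}(z) = det[(z d/dz)^{j+k} L_{m+n}^{(n+μ)}(z)]_{j,k=0}^{n−1}. Then the rational function w_{m,n}(z) = ((m+μ+2n)/(m+μ+2n+1))^n · τ_{m−1,n}^{(μ)}(z) τ_{m−1,n+1}^{(μ)}(z) / (τ_{m,n}^{(μ)}(z) τ_{m−2,n+1}^{(μ)}(z)) is a solution of P_V with parameters α = m²/2, β = −(m+2n+1+μ)²/2, γ = μ. -/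
noncomputable section

open Finset

section
namespace PVAux

/-- selection function: `0,1,…,n-1,n+p`. -/
def sel (n p k : ℕ) : ℕ := if k < n then k else n + p

theorem border {K : Type*} [Field K] (n : ℕ) (R : ℕ → ℕ → K) (p q : Fin 2)
    (A : Matrix (Fin n) (Fin n) K) (hA : A = Matrix.of fun j k : Fin n => R j k)
    [Invertible A] :
    Matrix.det (Matrix.of fun j k : Fin (n+1) => R (sel n p j) (sel n q k)) =
      A.det * ((Matrix.of fun i j : Fin 2 => R (n+i) (n+j)) -
        (Matrix.of fun (i : Fin 2) (k : Fin n) => R (n+i) k) * ⅟A *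
        (Matrix.of fun (k : Fin n) (i : Fin 2) => R k (n+i))) p q := by
  rw [← Matrix.det_submatrix_equiv_self (finSumFinEquiv (m := n) (n := 1))]
  have : (Matrix.of fun j k : Fin (n+1) => R (sel n p j) (sel n q k)).submatrix
      (finSumFinEquiv (m := n) (n := 1)) (finSumFinEquiv (m := n) (n := 1)) =
      Matrix.fromBlocks A (Matrix.of fun (k : Fin n) (_ : Fin 1) => R k (n+q))
        (Matrix.of fun (_ : Fin 1) (k : Fin n) => R (n+p) k)
        (Matrix.of fun (_ _ : Fin 1) => R (n+p) (n+q)) := by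
    ext i j
    rcases i with i | i <;> rcases j with j | j <;> simp [hA, sel]
  rw [this, Matrix.det_fromBlocks₁₁]
  congr 1
  simp [Matrix.mul_apply]

theorem sylv {K : Type*} [Field K] (n : ℕ) (R : ℕ → ℕ → K)
    (h : Matrix.det (Matrix.of fun j k : Fin n => R j k) ≠ 0) :
    Matrix.det (Matrix.of fun j k : Fin (n+2) => R j k) *
      Matrix.det (Matrix.of fun j k : Fin n => R j k) =
    Matrix.det (Matrix.of fun j k : Fin (n+1) => R j k) *
      Matrix.det (Matrix.of fun j k : Fin (n+1) => R (sel n 1 j) (sel n 1 k)) -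
    Matrix.det (Matrix.of fun j k : Fin (n+1) => R j (sel n 1 k)) *
      Matrix.det (Matrix.of fun j k : Fin (n+1) => R (sel n 1 j) k) := by
  have hs : ∀ j : Fin (n+1), sel n 0 j = j := by
    intro j
    have := j.2
    unfold sel; split_ifs <;> omega
  set A : Matrix (Fin n) (Fin n) K := Matrix.of fun j k : Fin n => R j k with hA
  have : Invertible A := A.invertibleOfIsUnitDet (isUnit_iff_ne_zero.mpr h)
  have h00 := border n R 0 0 A hA
  have h01 := border n R 0 1 A hA
  have h10 := border n R 1 0 A hA
  have h11 := border n R 1 1 A hA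
  simp only [Fin.val_zero, Fin.val_one, hs] at h00 h01 h10 h11
  rw [h00, h01, h10, h11]
  rw [← Matrix.det_submatrix_equiv_self (finSumFinEquiv (m := n) (n := 2))]
  have : (Matrix.of fun j k : Fin (n+2) => R j k).submatrix
      (finSumFinEquiv (m := n) (n := 2)) (finSumFinEquiv (m := n) (n := 2)) =
      Matrix.fromBlocks A (Matrix.of fun (k : Fin n) (i : Fin 2) => R k (n+i))
        (Matrix.of fun (i : Fin 2) (k : Fin n) => R (n+i) k)
        (Matrix.of fun (i j : Fin 2) => R (n+i) (n+j)) := by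
    ext i j
    rcases i with i | i <;> rcases j with j | j <;> simp [hA]
  rw [this, Matrix.det_fromBlocks₁₁, Matrix.det_fin_two]
  ring

theorem D_prod {K : Type*} [CommRing K] (D : Derivation ℤ K K) {ι : Type*} [DecidableEq ι]
    (s : Finset ι) (f : ι → K) :
    D (∏ i ∈ s, f i) = ∑ i ∈ s, ∏ j ∈ s, Function.update f i (D (f i)) j := by
  induction s using Finset.induction_on with
  | empty => simp
  | insert a s ha ih =>
    rw [Finset.prod_insert ha, Derivation.leibniz, ih, Finset.sum_insert ha,
      Finset.prod_insert ha]
    simp only [smul_eq_mul, Function.update_self]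
    rw [add_comm]
    congr 1
    · rw [mul_comm]; congr 1
      apply Finset.prod_congr rfl
      intro j hj
      rw [Function.update_of_ne (by rintro rfl; exact ha hj)]
    · rw [Finset.mul_sum]
      apply Finset.sum_congr rfl
      intro i hi
      rw [Finset.prod_insert ha, Function.update_of_ne (by rintro rfl; exact ha hi)]

theorem D_det {K : Type*} [CommRing K] (D : Derivation ℤ K K) {n : ℕ}
    (A : Matrix (Fin n) (Fin n) K) :
    D A.det = ∑ i, (A.updateRow i (fun k => D (A i k))).det := by
  rw [← Matrix.det_transpose, Matrix.det_apply, map_sum]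
  have : ∀ i, (A.updateRow i (fun k => D (A i k))).det =
      ((A.updateRow i (fun k => D (A i k))).transpose).det := fun i =>
        (Matrix.det_transpose _).symm
  simp_rw [this, Matrix.det_apply]
  rw [Finset.sum_comm]
  apply Finset.sum_congr rfl
  intro σ _
  rw [← Finset.smul_sum]
  have hsm : ∀ (u : ℤˣ) (x : K), D (u • x) = u • D x := by
    intro u x
    rw [Units.smul_def, Units.smul_def, map_zsmul]
  rw [hsm, D_prod]
  congr 1
  apply Finset.sum_congr rfl
  intro i _
  apply Finset.prod_congr rfl
  intro j _
  simp only [Matrix.transpose_apply, Matrix.updateRow_apply, Function.update_apply]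
  split_ifs with h
  · rw [h]
  · rfl

theorem D_rows {K : Type*} [CommRing K] (D : Derivation ℤ K K) (n : ℕ) (R : ℕ → ℕ → K)
    (hR : ∀ j k, D (R j k) = R (j+1) k) :
    D (Matrix.det (Matrix.of fun j k : Fin (n+1) => R j k)) =
      Matrix.det (Matrix.of fun j k : Fin (n+1) => R (sel n 1 j) k) := by
  rw [D_det, Finset.sum_eq_single (Fin.last n)]
  · congr 1
    ext j k
    rw [Matrix.updateRow_apply]
    by_cases h : j = Fin.last n
    · simp [h, hR, sel]
    · have : (j : ℕ) < n := by
        have := j.2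
        have h2 : (j : ℕ) ≠ n := fun e => h (Fin.ext e)
        omega
      simp [h, sel, this]
  · intro i _ hi
    have hlt : (i : ℕ) < n := by
      have := i.2
      have h2 : (i : ℕ) ≠ n := fun e => hi (Fin.ext e)
      omega
    have hne : i ≠ ⟨i + 1, by omega⟩ := by
      intro e; have := congrArg Fin.val e; simp at this
    apply Matrix.det_zero_of_row_eq hne
    ext k
    rw [Matrix.updateRow_self, Matrix.updateRow_ne hne.symm]
    simp [hR]
  · simp

/-- Hankel determinant. -/
def Hk {K : Type*} [CommRing K] (D : Derivation ℤ K K) (n : ℕ) (h : K) : K :=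
  Matrix.det (Matrix.of fun j k : Fin n => D^[(j:ℕ) + k] h)

theorem Hk_zero {K : Type*} [CommRing K] (D : Derivation ℤ K K) (h : K) : Hk D 0 h = 1 := by
  simp [Hk]

theorem Hk_one {K : Type*} [CommRing K] (D : Derivation ℤ K K) (h : K) : Hk D 1 h = h := by
  simp [Hk]

theorem toda {K : Type*} [Field K] (D : Derivation ℤ K K) (n : ℕ) (h : K)
    (h0 : Hk D n h ≠ 0) :
    Hk D (n+2) h * Hk D n h = Hk D (n+1) h * D (D (Hk D (n+1) h)) - (D (Hk D (n+1) h))^2 := by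
  have e := sylv n (fun j k => D^[j+k] h) h0
  have hR : ∀ j k, D (D^[j+k] h) = D^[j+1+k] h := by
    intro j k
    rw [← Function.iterate_succ_apply' D]; congr 2; omega
  have d1 := D_rows D n (fun j k => D^[j+k] h) hR
  have d1' : Matrix.det (Matrix.of fun j k : Fin (n+1) => D^[(j:ℕ)+ (sel n 1 k)] h) =
     Matrix.det (Matrix.of fun j k : Fin (n+1) => D^[(sel n 1 j) + k] h) := by
    rw [← Matrix.det_transpose]
    congr 1
    ext j k
    simp [add_comm]
  have d2 := D_rows D n (fun j k => D^[j+sel n 1 k] h) (fun j k => hR j _)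
  unfold Hk
  rw [e, d1, ← d2, d1']
  rw [← d1]; ring

theorem det_rot {K : Type*} [CommRing K] (n : ℕ) (f : ℕ → K) (x : K) (r : ℕ → ℕ)
    (T : ℕ → ℕ → K) (hT : ∀ j k, T j k = if k < n then f (r j + k + 1) - x * f (r j + k) else f (r j)) :
    Matrix.det (Matrix.of fun j k : Fin (n+1) => T j k) = (-1)^n *
      Matrix.det (Matrix.of fun j k : Fin (n+1) => f (r j + k)) := by
  rw [Matrix.det_eq_of_forall_col_eq_smul_add_pred (A := Matrix.of fun j k : Fin (n+1) => f (r j + k))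
    (B := Matrix.of fun j k : Fin (n+1) => if (k:ℕ) = 0 then f (r j) else
      f (r j + k) - x * f (r j + k - 1)) (fun _ => x)]
  · have h := Matrix.det_permute' (finRotate (n+1)) (Matrix.of fun j k : Fin (n+1) => if (k:ℕ) = 0 then f (r j) else
      f (r j + k) - x * f (r j + k - 1))
    rw [sign_finRotate] at h
    simp only [Nat.add_sub_cancel] at h
    push_cast at h
    rw [← h]
    congr 1
    ext j k
    simp only [Matrix.of_apply, Matrix.submatrix_apply, id]
    rw [hT]
    by_cases hk : (k:ℕ) < n
    · have : k = ⟨k, by omega⟩ := rfl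
      rw [if_pos hk, this, finRotate_of_lt hk]
      simp [← add_assoc]
    · have : k = Fin.last n := Fin.ext (by have := k.2; simp; omega)
      rw [this, finRotate_last]; simp
  · intro i; simp
  · intro i j
    simp [← add_assoc]

theorem chris {K : Type*} [Field K] (D : Derivation ℤ K K) (n : ℕ) (h u x : K) (hx : D x = 0)
    (hu : u = D h - x * h)
    (h0 : Hk D n u ≠ 0) :
    Hk D (n+2) h * Hk D n u =
      D (Hk D (n+1) u) * Hk D (n+1) h - Hk D (n+1) u * D (Hk D (n+1) h) := by
  have hR : ∀ g : K, ∀ j k, D (D^[j+k] g) = D^[j+1+k] g := by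
    intro g j k
    rw [← Function.iterate_succ_apply' D]; congr 2; omega
  have hui : ∀ j, D^[j] u = D^[j+1] h - x * D^[j] h := by
    intro j
    induction j with
    | zero => simpa using hu
    | succ j ih =>
      rw [Function.iterate_succ_apply', ih, map_sub, Derivation.leibniz, hx,
        Function.iterate_succ_apply' D (j+1), Function.iterate_succ_apply' D j]
      simp
  set R : ℕ → ℕ → K := fun j k => if k < n + 1 then D^[j+k] u else D^[j] h with hRd
  have sel1 : ∀ j : Fin (n+1), sel n 0 j = j := by
    intro j
    have := j.2
    unfold sel; split_ifs <;> omega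
  have R0 : Matrix.det (Matrix.of fun j k : Fin n => R j k) = Hk D n u := by
    unfold Hk; congr 1; ext j k
    have := k.2
    simp only [Matrix.of_apply, hRd]
    rw [if_pos (by omega)]
  have R1 : Matrix.det (Matrix.of fun j k : Fin (n+1) => R j k) = Hk D (n+1) u := by
    unfold Hk; congr 1; ext j k
    have := k.2
    simp only [Matrix.of_apply, hRd]
    rw [if_pos (by omega)]
  have R2 : Matrix.det (Matrix.of fun j k : Fin (n+1) => R (sel n 1 j) k) = D (Hk D (n+1) u) := by
    unfold Hk
    rw [D_rows D n (fun j k => D^[j+k] u) (hR u)]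
    congr 1; ext j k
    have := k.2
    simp only [Matrix.of_apply, hRd]
    rw [if_pos (by omega)]
  have R3 : Matrix.det (Matrix.of fun j k : Fin (n+1) => R j (sel n 1 k)) =
      (-1)^n * Hk D (n+1) h := by
    unfold Hk
    refine det_rot n (fun i => D^[i] h) x id
      (fun j k => R j (sel n 1 k)) ?_
    intro j k
    simp only [hRd, sel, id]
    by_cases hk : k < n
    · simp only [hk, if_true]
      rw [if_pos (by omega), hui]
    · simp [hk]
  have R4 : Matrix.det (Matrix.of fun j k : Fin (n+1) => R (sel n 1 j) (sel n 1 k)) =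
      (-1)^n * D (Hk D (n+1) h) := by
    unfold Hk
    rw [D_rows D n (fun j k => D^[j+k] h) (hR h)]
    refine det_rot n (fun i => D^[i] h) x (sel n 1)
      (fun j k => R (sel n 1 j) (sel n 1 k)) ?_
    intro j k
    simp only [hRd]
    generalize sel n 1 j = J
    simp only [sel]
    by_cases hk : k < n
    · simp only [hk, if_true]
      rw [if_pos (by omega), hui]
    · simp [hk]
  have R5 : Matrix.det (Matrix.of fun j k : Fin (n+2) => R j k) =
      (-1)^(n+1) * Hk D (n+2) h := by
    unfold Hk
    refine det_rot (n+1) (fun i => D^[i] h) x id R ?_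
    intro j k
    simp only [hRd, id]
    by_cases hk : k < n + 1
    · simp only [hk, if_true]
      rw [hui]
    · simp [hk]
  have e := sylv n R (by rw [R0]; exact h0)
  rw [R0, R1, R2, R3, R4, R5] at e
  have hp : ((-1:K))^n ≠ 0 := pow_ne_zero _ (by simp)
  apply mul_left_cancel₀ hp
  rw [pow_succ] at e
  linear_combination (-1 : K) * e

end PVAux
end

section
namespace PVAux

variable {K : Type*} [Field K]

theorem D_div (D : Derivation ℤ K K) (a b : K) (hb : b ≠ 0) :
    D (a / b) = (b * D a - a * D b) / b ^ 2 := by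
  rw [Derivation.leibniz_div]; simp only [smul_eq_mul]; field_simp

theorem D_mul (D : Derivation ℤ K K) (a b : K) : D (a * b) = a * D b + b * D a := by
  rw [Derivation.leibniz]; simp

theorem D_sq (D : Derivation ℤ K K) (a : K) : D (a ^ 2) = 2 * a * D a := by
  rw [pow_two, D_mul]; ring

/-- Toda chain data. -/
structure Chain (D : Derivation ℤ K K) (x : K) (L : ℕ) (M U : ℕ → K) : Prop where
  hx : D x = 0
  M0 : M 0 = 1
  U0 : U 0 = 1
  hM : ∀ k ≤ L + 1, M k ≠ 0
  hU : ∀ k ≤ L, U k ≠ 0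
  todaM : ∀ n ≤ L, M (n+2) * M n = M (n+1) * D (D (M (n+1))) - (D (M (n+1)))^2
  todaU : ∀ n ≤ L, U (n+2) * U n = U (n+1) * D (D (U (n+1))) - (D (U (n+1)))^2
  chr : ∀ n ≤ L, M (n+2) * U n = D (U (n+1)) * M (n+1) - U (n+1) * D (M (n+1))
  base : U 1 = D (M 1) - x * M 1

def al (D : Derivation ℤ K K) (M : ℕ → K) (n : ℕ) : K := D (M (n+1)) / M (n+1) - D (M n) / M n
def bb (M : ℕ → K) (n : ℕ) : K := M (n+2) * M n / M (n+1) ^ 2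
def rr (M U : ℕ → K) (n : ℕ) : K := - (U (n+1) * M n) / (M (n+1) * U n)

theorem D_logD (D : Derivation ℤ K K) (a b c : K) (hb : b ≠ 0)
    (h : a * c = b * D (D b) - (D b)^2) : D (D b / b) = a * c / b ^ 2 := by
  rw [D_div _ _ _ hb, h]; ring

theorem D_al_zero (D : Derivation ℤ K K) (M : ℕ → K) (h0 : M 0 = 1) (h1 : M 1 ≠ 0)
    (ht : M 2 * M 0 = M 1 * D (D (M 1)) - (D (M 1))^2) : D (al D M 0) = bb M 0 := by
  unfold al bb
  rw [map_sub, D_logD D _ _ _ h1 ht, h0]; simp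

theorem D_al_succ (D : Derivation ℤ K K) (M : ℕ → K) (n : ℕ) (h1 : M (n+1) ≠ 0) (h2 : M (n+2) ≠ 0)
    (ht : M (n+2) * M n = M (n+1) * D (D (M (n+1))) - (D (M (n+1)))^2)
    (ht' : M (n+3) * M (n+1) = M (n+2) * D (D (M (n+2))) - (D (M (n+2)))^2) :
    D (al D M (n+1)) = bb M (n+1) - bb M n := by
  unfold al bb
  rw [map_sub, D_logD D _ _ _ h1 ht, D_logD D _ _ _ h2 ht']

theorem D_bb (D : Derivation ℤ K K) (M : ℕ → K) (n : ℕ) (h0 : M n ≠ 0) (h1 : M (n+1) ≠ 0)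
    (h2 : M (n+2) ≠ 0) : D (bb M n) = bb M n * (al D M (n+1) - al D M n) := by
  unfold al bb
  rw [D_div _ _ _ (pow_ne_zero _ h1), D_mul, D_sq]
  field_simp
  ring

section
variable {D : Derivation ℤ K K} {x : K} {L : ℕ} {M U : ℕ → K} (c : Chain D x L M U)
include c

theorem Chain.rr_ne (n : ℕ) (hn : n + 1 ≤ L) : rr M U n ≠ 0 := by
  have h1 := c.hM n (by omega)
  have h2 := c.hM (n+1) (by omega)
  have h3 := c.hU n (by omega)
  have h4 := c.hU (n+1) (by omega)
  unfold rr
  rw [neg_div, neg_ne_zero]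
  positivity

theorem Chain.dlogP (n : ℕ) (hn : n + 1 ≤ L) :
    D (U (n+1)) / U (n+1) - D (M (n+1)) / M (n+1) = - bb M n / rr M U n := by
  have h1 := c.hM n (by omega)
  have h2 := c.hM (n+1) (by omega)
  have h3 := c.hU n (by omega)
  have h4 := c.hU (n+1) (by omega)
  have e := c.chr n (by omega)
  unfold bb rr
  field_simp
  linear_combination -e

theorem Chain.D_rr_aux (n : ℕ) (hn : n + 1 ≤ L)
    (E : D (U n) / U n - D (M n) / M n = rr M U n - x + al D M n) :
    D (rr M U n) = (x - al D M n) * rr M U n - bb M n - rr M U n ^ 2 := by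
  have h1 := c.hM n (by omega)
  have h2 := c.hM (n+1) (by omega)
  have h3 := c.hU n (by omega)
  have h4 := c.hU (n+1) (by omega)
  have hr := c.rr_ne n hn
  have e := c.dlogP n hn
  have k : D (rr M U n) = rr M U n * ((D (U (n+1)) / U (n+1) - D (M (n+1)) / M (n+1)) -
      (D (U n) / U n - D (M n) / M n)) := by
    unfold rr
    rw [D_div _ _ _ (mul_ne_zero h2 h3), map_neg, D_mul, D_mul]
    field_simp
    ring
  rw [k, E, e]
  field_simp
  ring

theorem Chain.E (n : ℕ) (hn : n ≤ L) :
    D (U n) / U n - D (M n) / M n = rr M U n - x + al D M n := by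
  induction n with
  | zero =>
    have h1 := c.hM 1 (by omega)
    unfold rr al
    rw [c.M0, c.U0, zero_add, c.base, Derivation.map_one_eq_zero]
    field_simp
    ring
  | succ n ih =>
    have h1 := c.hM n (by omega)
    have h2 := c.hM (n+1) (by omega)
    have h3 := c.hU n (by omega)
    have h4 := c.hU (n+1) (by omega)
    have h5 := c.hM (n+2) (by omega)
    have hr := c.rr_ne n hn
    have T4 := c.D_rr_aux n hn (ih (by omega))
    have e := c.dlogP n hn
    have hb : bb M n ≠ 0 := by unfold bb; positivity
    have e2 := congrArg D e
    rw [map_sub, D_logD D _ _ _ h4 (c.todaU n (by omega)), D_logD D _ _ _ h2 (c.todaM n (by omega)),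
      D_div _ _ _ hr, map_neg, D_bb D M n h1 h2 h5, T4] at e2
    have e3 : U (n + 2) * U n / U (n+1) ^ 2 = bb M n * rr M U (n+1) / rr M U n := by
      unfold bb rr
      field_simp
    have e4 : M (n + 2) * M n / M (n+1) ^ 2 = bb M n := rfl
    rw [e3, e4] at e2
    rw [e]
    field_simp at e2 ⊢
    linear_combination -e2

theorem Chain.T3 (n : ℕ) (hn : n + 1 ≤ L) :
    rr M U (n+1) = x - al D M (n+1) - bb M n / rr M U n := by
  have := c.E (n+1) hn
  rw [c.dlogP n hn] at this
  rw [neg_div] at this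
  linear_combination -this

theorem Chain.T30 : rr M U 0 = x - al D M 0 := by
  have := c.E 0 (by omega)
  rw [c.M0, c.U0] at this
  simp at this
  linear_combination -this

theorem Chain.T4 (n : ℕ) (hn : n + 1 ≤ L) :
    D (rr M U n) = (x - al D M n) * rr M U n - bb M n - rr M U n ^ 2 :=
  c.D_rr_aux n hn (c.E n (by omega))

end
end PVAux
end

section
namespace PVAux

variable {K : Type*} [Field K]

/-- The two algebraic relations along the chain. -/
theorem relations (D : Derivation ℤ K K) (N ν z : K) (L : ℕ) (M U V : ℕ → K)
    (hz : D z = z)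
    (c1 : Chain D N L M U) (c2 : Chain D (-ν) L M V)
    (hode : D (D (M 1)) + ν * D (M 1) = z * (D (M 1) - N * M 1)) (n : ℕ) (hn : n + 1 ≤ L) :
    bb M n = rr M V n * (N - n - rr M U n) - z * rr M U n ∧
    al D M n * rr M V n = z * (rr M V n + ν - n) + (rr M V n + z) * (N - rr M U n) := by
  have hN := c1.hx
  have hν : D ν = 0 := by have := c2.hx; simpa using this
  induction n with
  | zero =>
    have h1 := c1.hM 1 (by omega)
    have hb := D_al_zero D M c1.M0 h1 (c1.todaM 0 (by omega))
    rw [c1.T30, c2.T30]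
    refine ⟨?_, by push_cast; ring⟩
    have h2 : D (al D M 0) = (M 1 * D (D (M 1)) - D (M 1) * D (M 1)) / M 1 ^ 2 := by
      unfold al
      rw [map_sub, D_div _ _ _ h1, c1.M0]; simp
    have h3 : al D M 0 = D (M 1) / M 1 := by unfold al; rw [c1.M0]; simp
    rw [← hb, h2, h3]
    push_cast
    field_simp
    linear_combination M 1 * hode
  | succ n ih =>
    obtain ⟨I2, I3⟩ := ih (by omega)
    have m0 := c1.hM n (by omega)
    have m1 := c1.hM (n+1) (by omega)
    have m2 := c1.hM (n+2) (by omega)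
    have hR := c1.rr_ne n (by omega)
    have hS := c2.rr_ne n (by omega)
    have hb : bb M n ≠ 0 := by unfold bb; positivity
    have T3R := c1.T3 n (by omega)
    have T3S := c2.T3 n (by omega)
    have T4R := c1.T4 n (by omega)
    have T4S := c2.T4 n (by omega)
    have T4R' := c1.T4 (n+1) (by omega)
    have T4S' := c2.T4 (n+1) (by omega)
    have Dal := D_al_succ D M n m1 m2 (c1.todaM n (by omega)) (c1.todaM (n+1) (by omega))
    have Db := D_bb D M n m0 m1 m2
    have Dn : D (n : K) = 0 := Derivation.map_natCast D n
    have d2 := congrArg D I2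
    rw [map_sub, D_mul, D_mul, map_sub, map_sub, hN, Dn, T4R, T4S, hz] at d2
    rw [d2] at Db
    set R := rr M U n
    set S := rr M V n
    set a := al D M n
    set b := bb M n
    set R' := rr M U (n+1)
    set S' := rr M V (n+1)
    set a' := al D M (n+1)
    set b' := bb M (n+1)
    have Q : N - a' - R' = b / R := by rw [T3R]; ring
    -- (1)
    have I1 : b * (a' - a) = b * (R - a - (N + ν) + n + z) - z * (n+1) * R := by
      linear_combination -Db + (S + a + ν) * I2 + R * I3
    have I1' : b = z * (n+1) + (a' - n - z + (N + ν)) * (N - a' - R') := by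
      rw [Q]; field_simp; linear_combination -I1
    have J3 : a' * S' = z * (S' + ν - (n+1)) + (S' + z) * (N - R') := by
      have : z * (a' - (n+1) + ν + S') + (S' + z) * (N - a' - R') = 0 := by
        rw [Q, T3S]
        field_simp
        linear_combination (-b) * I2 - S * I1
      linear_combination -this
    have d3 := congrArg D J3
    have Dn1 : D ((n:K)+1) = 0 := by rw [map_add, Dn]; simp
    simp only [map_add, map_sub, D_mul, T4R', T4S', Dal, hz, hN, hν, Dn, Derivation.map_one_eq_zero] at d3
    have hQ : N - a' - R' ≠ 0 := by rw [Q]; exact div_ne_zero hb hR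
    push_cast
    refine ⟨?_, J3⟩
    apply mul_left_cancel₀ hQ
    linear_combination d3 + S' * I1' + (S' - 1) * J3

theorem pv_alg (D : Derivation ℤ K K) (N ν z n R S a b w : K)
    (hz : D z = z) (hN : D N = 0) (hν : D ν = 0) (hn : D n = 0)
    (hR : R ≠ 0) (hS : S ≠ 0)
    (T4R : D R = (N - a) * R - b - R ^ 2) (T4S : D S = (-ν - a) * S - b - S ^ 2)
    (I2 : b = S * (N - n - R) - z * R)
    (I3 : a * S = z * (S + ν - n) + (S + z) * (N - R)) (hw : w = 1 - S / R) :
    2 * w * (w - 1) * D (D w) = (3 * w - 1) * (D w) ^ 2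
      + (w - 1) ^ 3 * ((N - n) ^ 2 * w ^ 2 - (N + ν) ^ 2)
      + 2 * (ν - 1 - n) * z * w ^ 2 * (w - 1) - z ^ 2 * w ^ 2 * (w + 1) := by
  have ha : a = (z * (S + ν - n) + (S + z) * (N - R)) / S := by field_simp; exact I3
  have DG : D (R - S) = (S * (N * R + ν * S - R^2 + S^2)
      - (R - S) * (z * (S + ν - n) + (S + z) * (N - R))) / S := by
    rw [map_sub, T4R, T4S, ha]; field_simp; ring
  have Dv : D (S / R) = z + (S / R) * (2 * (R - S) - (N + ν) - (N - n) + (N - n) * (S / R) - z) := by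
    rw [D_div _ _ _ hR, T4R, T4S, I2]; field_simp; ring
  have DDv : D (D (S / R)) = z + D (S / R) * (2 * (R - S) - (N + ν) - (N - n) + (N - n) * (S / R) - z)
      + (S / R) * (2 * D (R - S) + (N - n) * D (S / R) - z) := by
    conv_lhs => rw [Dv]
    have D2 : D (2 : K) = 0 := by
      have := Derivation.map_natCast D 2
      exact_mod_cast this
    simp only [map_add, map_sub, D_mul, hz, hN, hν, hn, D2]
    ring
  have w1 : D w = - D (S / R) := by rw [hw, map_sub]; simp
  have w2 : D (D w) = - D (D (S / R)) := by rw [w1, map_neg]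
  rw [w2, w1, DDv, DG, Dv, hw]
  field_simp
  ring

end PVAux
end

section
namespace PVAux

variable {K : Type*} [Field K]

theorem al_U (D : Derivation ℤ K K) (x : K) (L : ℕ) (M U : ℕ → K)
    (c : Chain D x L M U) (n : ℕ) (hn : n + 1 ≤ L) :
    al D U n = x - bb M n / rr M U n - rr M U n := by
  have h1 := c.dlogP n hn
  have h2 := c.E n (by omega)
  unfold al at h2 ⊢
  rw [neg_div] at h1
  linear_combination h1 - h2

theorem bb_U (D : Derivation ℤ K K) (x : K) (L : ℕ) (M U : ℕ → K)
    (c : Chain D x L M U) (n : ℕ) (hn : n + 1 ≤ L) :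
    bb U n = bb M n * rr M U (n+1) / rr M U n := by
  have h1 := c.hM n (by omega)
  have h2 := c.hM (n+1) (by omega)
  have h3 := c.hU n (by omega)
  have h4 := c.hU (n+1) (by omega)
  have h5 := c.hM (n+2) (by omega)
  unfold bb rr
  field_simp

theorem cdk (D : Derivation ℤ K K) (x y : K) (hxy : x ≠ y) (L : ℕ) (M U V W : ℕ → K)
    (c1 : Chain D x (L+1) M U) (c2 : Chain D y (L+1) M V) (c3 : Chain D y L U W)
    (n : ℕ) (hn : n ≤ L) :
    (x - y) * W n * M n = U n * V n * (rr M U n - rr M V n) ∧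
    (n + 1 ≤ L → rr U W n * (rr M U n - rr M V n) =
      (rr M U (n+1) - rr M V (n+1)) * rr M V n) := by
  have hxy' : x - y ≠ 0 := sub_ne_zero.mpr hxy
  induction n with
  | zero =>
    constructor
    · rw [c1.T30, c2.T30, c1.M0, c1.U0, c2.U0, c3.U0]; ring
    · intro h
      have hR := c1.rr_ne 0 (by omega)
      have hS := c2.rr_ne 0 (by omega)
      rw [c3.T30, al_U D x _ M U c1 0 (by omega), c1.T3 0 (by omega), c2.T3 0 (by omega)]
      have e1 := c1.T30
      have e2 := c2.T30
      have ex : al D M 0 = x - rr M U 0 := by rw [e1]; ring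
      have hy : y = rr M V 0 + x - rr M U 0 := by rw [e1, e2]; ring
      generalize al D M 1 = q
      rw [hy]
      field_simp
      ring
  | succ n ih =>
    obtain ⟨I, J⟩ := ih (by omega)
    have J := J hn
    have hR := c1.rr_ne n (by omega)
    have hS := c2.rr_ne n (by omega)
    have hW := c3.rr_ne n (by omega)
    have hR' := c1.rr_ne (n+1) (by omega)
    have hS' := c2.rr_ne (n+1) (by omega)
    have m0 := c1.hM n (by omega)
    have m1 := c1.hM (n+1) (by omega)
    have u0 := c1.hU n (by omega)
    have u1 := c1.hU (n+1) (by omega)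
    have v0 := c2.hU n (by omega)
    have v1 := c2.hU (n+1) (by omega)
    have w0 := c3.hU n (by omega)
    have w1 := c3.hU (n+1) (by omega)
    have hG : rr M U n - rr M V n ≠ 0 := by
      intro h0
      rw [h0, mul_zero] at I
      exact (mul_ne_zero (mul_ne_zero hxy' w0) m0) I
    constructor
    · have eV : V (n+1) = - rr M V n * M (n+1) * V n / M n := by
        unfold rr; field_simp
      have eW : W (n+1) = - rr U W n * U (n+1) * W n / U n := by
        unfold rr; field_simp
      rw [eV, eW]
      field_simp
      apply mul_left_cancel₀ hG
      linear_combination (-(x-y)* W n * M n) * J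
        - (rr M U (n+1) - rr M V (n+1)) * rr M V n * I
    · intro h
      have e1 := c3.T3 n (by omega)
      rw [al_U D x _ M U c1 (n+1) (by omega), bb_U D x _ M U c1 n (by omega)] at e1
      have f1 := c1.T3 n (by omega)
      have f2 := c2.T3 n (by omega)
      have g1 := c1.T3 (n+1) (by omega)
      have g2 := c2.T3 (n+1) (by omega)
      have k1 : rr M U (n+1) - rr M V (n+1) = x - y + bb M n * (rr M U n - rr M V n) / (rr M U n * rr M V n) := by
        rw [f1, f2]; field_simp; ring
      have k2 : (rr M U (n+2) - rr M V (n+2)) * rr M V (n+1) = (x - y) * rr M V (n+1) + bb M (n+1) * (rr M U (n+1) - rr M V (n+1)) / (rr M U (n+1)) := by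
        rw [g1, g2]; field_simp; ring
      rw [show n + 1 + 1 = n + 2 from rfl, k2, e1]
      have k3 : rr M U (n+1) / rr U W n * (rr M U (n+1) - rr M V (n+1)) = rr M U (n+1) * (rr M U n - rr M V n) / rr M V n := by
        field_simp; linear_combination -J
      have k4 : bb M n * rr M U (n + 1) / rr M U n / rr U W n * (rr M U (n+1) - rr M V (n+1))
          = rr M U (n+1) * (rr M U (n+1) - rr M V (n+1) - (x - y)) := by
        calc _ = bb M n / rr M U n * (rr M U (n+1) / rr U W n * (rr M U (n+1) - rr M V (n+1))) := by
              field_simp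
          _ = rr M U (n+1) * (bb M n * (rr M U n - rr M V n) / (rr M U n * rr M V n)) := by
              rw [k3]; field_simp
          _ = _ := by rw [k1]; ring
      linear_combination -k4

/-- Final algebraic statement in a differential field. -/
theorem pv_field (D : Derivation ℤ K K) (N ν z : K) (hNν : N + ν ≠ 0) (L : ℕ) (M U V W : ℕ → K)
    (hz : D z = z)
    (c1 : Chain D N (L+1) M U) (c2 : Chain D (-ν) (L+1) M V) (c3 : Chain D (-ν) L U W)
    (hode : D (D (M 1)) + ν * D (M 1) = z * (D (M 1) - N * M 1)) (n : ℕ) (hn : n ≤ L)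
    (w : K) (hw : w = - (N + ν) * W n * M (n+1) / (V n * U (n+1))) :
    2 * w * (w - 1) * D (D w) = (3 * w - 1) * (D w) ^ 2
      + (w - 1) ^ 3 * ((N - n) ^ 2 * w ^ 2 - (N + ν) ^ 2)
      + 2 * (ν - 1 - n) * z * w ^ 2 * (w - 1) - z ^ 2 * w ^ 2 * (w + 1) := by
  obtain ⟨I2, I3⟩ := relations D N ν z (L+1) M U V hz c1 c2 hode n (by omega)
  have hν : D ν = 0 := by have := c2.hx; simpa using this
  have hR := c1.rr_ne n (by omega)
  have hS := c2.rr_ne n (by omega)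
  have m0 := c1.hM n (by omega)
  have m1 := c1.hM (n+1) (by omega)
  have u0 := c1.hU n (by omega)
  have u1 := c1.hU (n+1) (by omega)
  have v0 := c2.hU n (by omega)
  have hne : N ≠ -ν := fun h => hNν (by rw [h]; ring)
  obtain ⟨I, -⟩ := cdk D N (-ν) hne L M U V W c1 c2 c3 n hn
  refine pv_alg D N ν z n _ _ _ _ w hz c1.hx hν (Derivation.map_natCast D n) hR hS
    (c1.T4 n (by omega)) (c2.T4 n (by omega)) I2 I3 ?_
  have : 1 - rr M V n / rr M U n = (rr M U n - rr M V n) / rr M U n := by field_simp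
  rw [this, hw, eq_div_iff hR]
  have h2 : rr M U n - rr M V n = (N + ν) * W n * M n / (U n * V n) := by
    field_simp; linear_combination -I
  rw [h2]
  unfold rr
  field_simp

end PVAux
end

section
namespace PVAux

open Polynomial

/-- derivations over the integers, with the canonical integer algebra structure -/
abbrev Der (B : Type*) [CommRing B] := Derivation ℤ B B

def mkD (B : Type*) [CommRing B] (d : B → B) (h1 : ∀ a b, d (a + b) = d a + d b)
    (h2 : ∀ a b, d (a * b) = a * d b + b * d a) : Der B :=
  Derivation.mk' (AddMonoidHom.toIntLinearMap (AddMonoidHom.mk' d h1)) h2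

theorem mkD_apply (B : Type*) [CommRing B] (d : B → B) (h1 : ∀ a b, d (a + b) = d a + d b)
    (h2 : ∀ a b, d (a * b) = a * d b + b * d a) (b : B) : mkD B d h1 h2 b = d b := rfl

/-- extension of a derivation to the fraction field -/
theorem exists_D (B K : Type*) [CommRing B] [IsDomain B] [Field K] [Algebra B K]
    [IsFractionRing B K] (δ : Der B) :
    ∃ D : Der K, ∀ b, D (algebraMap B K b) = algebraMap B K (δ b) := by
  set ι := algebraMap B K
  let f : B →+* DualNumber K :=
    { toFun := fun b => TrivSqZeroExt.inl (ι b) + TrivSqZeroExt.inr (ι (δ b))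
      map_one' := by simp
      map_zero' := by simp
      map_add' := by
        intro a b
        ext <;> simp
      map_mul' := by
        intro a b
        ext <;> simp [mul_comm] }
  have hf : ∀ y : nonZeroDivisors B, IsUnit (f y) := by
    intro y
    rw [TrivSqZeroExt.isUnit_iff_isUnit_fst]
    simp only [f, RingHom.coe_mk, MonoidHom.coe_mk, OneHom.coe_mk, TrivSqZeroExt.fst_add,
      TrivSqZeroExt.fst_inl, TrivSqZeroExt.fst_inr, add_zero]
    rw [isUnit_iff_ne_zero]
    exact IsFractionRing.to_map_ne_zero_of_mem_nonZeroDivisors y.2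
  let g : K →+* DualNumber K := IsLocalization.lift (M := nonZeroDivisors B) hf
  have hg : ∀ b, g (ι b) = f b := fun b => IsLocalization.lift_eq hf b
  have hfst : ∀ x, (g x).fst = x := by
    have : (TrivSqZeroExt.fstHom K K K).toRingHom.comp g
        = RingHom.id _ := by
      apply IsLocalization.ringHom_ext (nonZeroDivisors B)
      ext b
      change (g (ι b)).fst = ι b
      rw [hg]; simp [f]
    intro x
    exact congrArg (fun h : K →+* K => h x) this
  refine ⟨mkD K (fun x => (g x).snd) (by intro a b; simp) ?_, ?_⟩
  · intro a b
    rw [map_mul, TrivSqZeroExt.snd_mul, hfst, hfst]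
    simp [mul_comm]
  · intro b
    rw [mkD_apply, hg]; simp [f]

/-- The Euler derivation `X d/dX`. -/
def eul (A : Type*) [CommRing A] : Der A[X] :=
  mkD A[X] (fun p => X * derivative p) (by intro a b; simp [mul_add])
    (by intro a b; simp only [derivative_mul]; ring)

theorem eul_apply {A : Type*} [CommRing A] (p : A[X]) : eul A p = X * derivative p := by
  rfl

def ser {A : Type*} [CommRing A] (c : ℕ → A) (T : ℕ) : A[X] := ∑ k ∈ range T, C (c k) * X ^ k

theorem eul_ser {A : Type*} [CommRing A] (c : ℕ → A) (T : ℕ) :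
    eul A (ser c T) = ser (fun k => k * c k) T := by
  unfold ser
  rw [map_sum]
  apply Finset.sum_congr rfl
  intro k _
  rw [eul_apply]
  rcases k with _ | k
  · simp
  · simp
    ring

theorem eul_iter_ser {A : Type*} [CommRing A] (c : ℕ → A) (T j : ℕ) :
    (eul A)^[j] (ser c T) = ser (fun k => k ^ j * c k) T := by
  induction j with
  | zero => simp
  | succ j ih =>
    rw [Function.iterate_succ_apply', ih, eul_ser]
    congr 1; ext k; ring

theorem Hk_map {A B : Type*} [CommRing A] [CommRing B] (D : Derivation ℤ A A) (E : Derivation ℤ B B)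
    (f : A →+* B) (hf : ∀ a, E (f a) = f (D a)) (n : ℕ) (a : A) : Hk E n (f a) = f (Hk D n a) := by
  unfold Hk
  rw [RingHom.map_det]
  congr 1
  ext j k
  simp only [Matrix.of_apply, RingHom.mapMatrix_apply, Matrix.map_apply]
  generalize (j : ℕ) + k = i
  induction i with
  | zero => rfl
  | succ i ih => rw [Function.iterate_succ_apply', Function.iterate_succ_apply', ih, hf]

theorem Hk_smul {A : Type*} [CommRing A] (D : Derivation ℤ A A) (a : A) (ha : D a = 0) (n : ℕ) (h : A) :
    Hk D n (a * h) = a ^ n * Hk D n h := by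
  unfold Hk
  have : ∀ i, D^[i] (a * h) = a * D^[i] h := by
    intro i
    induction i with
    | zero => rfl
    | succ i ih => rw [Function.iterate_succ_apply', Function.iterate_succ_apply', ih,
        Derivation.leibniz, ha]; simp
  simp_rw [this]
  rw [show (Matrix.of fun j k : Fin n => a * D^[(j:ℕ) + k] h) =
    a • (Matrix.of fun j k : Fin n => D^[(j:ℕ) + k] h) from by ext; simp]
  rw [Matrix.det_smul]; simp

theorem hankel_pos (ω : ℕ → ℝ) (n L T : ℕ) (hn : n ≤ L) (hLT : L ≤ T) (h0 : ∀ k < T, 0 ≤ ω k)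
    (h1 : ∀ k < L, 0 < ω k) :
    0 < Matrix.det (Matrix.of fun i j : Fin n => ∑ k ∈ range T, ω k * (k:ℝ) ^ ((i:ℕ) + j)) := by
  apply Matrix.PosDef.det_pos
  apply Matrix.PosDef.of_dotProduct_mulVec_pos
  · ext i j; simp [add_comm]
  · intro x hx
    have key : star x ⬝ᵥ (Matrix.of fun i j : Fin n => ∑ k ∈ range T, ω k * (k:ℝ) ^ ((i:ℕ) + j)).mulVec x
        = ∑ k ∈ range T, ω k * (∑ i : Fin n, x i * (k:ℝ)^(i:ℕ)) ^ 2 := by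
      simp only [dotProduct, Matrix.mulVec, Matrix.of_apply, star_trivial]
      simp only [Finset.sum_mul, Finset.mul_sum, pow_two]
      rw [Finset.sum_congr rfl (fun i _ => Finset.sum_comm), Finset.sum_comm]
      refine Finset.sum_congr rfl fun k _ => ?_
      refine Finset.sum_congr rfl fun i _ => ?_
      refine Finset.sum_congr rfl fun j _ => ?_
      rw [pow_add]; ring
    rw [key]
    have hnn : ∀ k ∈ range T, 0 ≤ ω k * (∑ i : Fin n, x i * (k:ℝ)^(i:ℕ)) ^ 2 := fun k hk =>
      mul_nonneg (h0 k (mem_range.mp hk)) (sq_nonneg _)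
    refine lt_of_le_of_ne (Finset.sum_nonneg hnn) ?_
    intro h
    have hz := (Finset.sum_eq_zero_iff_of_nonneg hnn).mp h.symm
    apply hx
    have hv : Function.Injective (fun k : Fin n => ((k:ℕ):ℝ)) := by
      intro a b hab; exact Fin.ext (by have : ((a:ℕ):ℝ) = (b:ℕ) := hab; exact_mod_cast this)
    apply Matrix.eq_zero_of_forall_index_sum_mul_pow_eq_zero hv
    intro j
    have hj : (j:ℕ) < L := lt_of_lt_of_le j.2 hn
    have := hz j (mem_range.mpr (by omega))
    rcases mul_eq_zero.mp this with h | h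
    · exact absurd h (h1 j hj).ne'
    · have := pow_eq_zero_iff (two_ne_zero) |>.mp h
      rw [← this]

theorem hankel_neg (ω : ℕ → ℝ) (n L T : ℕ) (hn : n ≤ L) (hLT : L ≤ T) (h0 : ∀ k < T, ω k ≤ 0)
    (h1 : ∀ k < L, ω k < 0) :
    Matrix.det (Matrix.of fun i j : Fin n => ∑ k ∈ range T, ω k * (k:ℝ) ^ ((i:ℕ) + j)) ≠ 0 := by
  have := hankel_pos (fun k => - ω k) n L T hn hLT (fun k hk => by linarith [h0 k hk])
    (fun k hk => by linarith [h1 k hk])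
  have e : (Matrix.of fun i j : Fin n => ∑ k ∈ range T, ω k * (k:ℝ) ^ ((i:ℕ) + j)) =
    - (Matrix.of fun i j : Fin n => ∑ k ∈ range T, (-ω k) * (k:ℝ) ^ ((i:ℕ) + j)) := by
    ext i j; simp
  rw [e, Matrix.det_neg]
  exact mul_ne_zero (pow_ne_zero _ (by norm_num)) this.ne'

theorem Hk_ne (c : ℕ → ℝ[X]) (n T : ℕ)
    (h : Matrix.det (Matrix.of fun i j : Fin n => ∑ k ∈ range T,
      ((c k).eval 1 * (-1)^k) * (k:ℝ) ^ ((i:ℕ) + j)) ≠ 0) :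
    Hk (eul ℝ[X]) n (ser c T) ≠ 0 := by
  intro h0
  apply h
  have := congrArg (eval₂RingHom (evalRingHom (1:ℝ)) (-1)) h0
  rw [map_zero] at this
  unfold Hk at this
  rw [RingHom.map_det] at this
  rw [← this]
  congr 1
  ext i j
  simp only [Matrix.of_apply, RingHom.mapMatrix_apply, Matrix.map_apply]
  rw [eul_iter_ser]
  unfold ser
  rw [map_sum]
  apply Finset.sum_congr rfl
  intro k _
  rw [map_mul, map_pow, coe_eval₂RingHom, eval₂_C, eval₂_X, coe_evalRingHom, eval_mul, eval_pow,
    eval_natCast]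
  ring

end PVAux
end

section
namespace PVAux

theorem chain_mk {K : Type*} [Field K] (D : Der K) (x : K) (L : ℕ) (h u : K)
    (hx : D x = 0) (hu : u = D h - x * h) (hM : ∀ k ≤ L + 1, Hk D k h ≠ 0)
    (hU : ∀ k ≤ L, Hk D k u ≠ 0) : Chain D x L (fun k => Hk D k h) (fun k => Hk D k u) where
  hx := hx
  M0 := Hk_zero D h
  U0 := Hk_zero D u
  hM := hM
  hU := hU
  todaM := fun n hn => toda D n h (hM n (by omega))
  todaU := fun n hn => toda D n u (hU n hn)
  chr := fun n hn => chris D n h u x hx hu (hU n hn)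
  base := by
    simp only [Hk_one]; exact hu

/-- the cleared form of the Painleve V equation -/
def Cleared {R : Type*} [CommRing R] (A A1 A2 B B1 B2 a k g z : R) : Prop :=
  2 * A * (A - B) * ((A2 * B - A * B2) * B - 2 * (A1 * B - A * B1) * B1) =
    (3 * A - B) * (A1 * B - A * B1) ^ 2 + (A - B) ^ 3 * (a ^ 2 * A ^ 2 - k ^ 2 * B ^ 2)
      + 2 * g * z * A ^ 2 * (A - B) * B ^ 2 - z ^ 2 * A ^ 2 * (A + B) * B ^ 2

theorem Cleared.map {R S : Type*} [CommRing R] [CommRing S] (f : R →+* S)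
    {A A1 A2 B B1 B2 a k g z : R} (h : Cleared A A1 A2 B B1 B2 a k g z) :
    Cleared (f A) (f A1) (f A2) (f B) (f B1) (f B2) (f a) (f k) (f g) (f z) := by
  have := congrArg f h
  unfold Cleared
  simpa only [map_add, map_sub, map_mul, map_pow, map_ofNat] using this

theorem Cleared.of_map {R S : Type*} [CommRing R] [CommRing S] (f : R →+* S)
    (hf : Function.Injective f) {A A1 A2 B B1 B2 a k g z : R}
    (h : Cleared (f A) (f A1) (f A2) (f B) (f B1) (f B2) (f a) (f k) (f g) (f z)) :
    Cleared A A1 A2 B B1 B2 a k g z := by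
  unfold Cleared at h
  apply hf
  simpa only [map_add, map_sub, map_mul, map_pow, map_ofNat] using h

theorem cleared_K {K : Type*} [Field K] (D : Der K) (A B a k g z w : K) (hB : B ≠ 0)
    (hw : w = A / B)
    (h : 2*w*(w-1)*D (D w) = (3*w-1)*(D w)^2 + (w-1)^3*(a^2*w^2-k^2) + 2*g*z*w^2*(w-1)
      - z^2*w^2*(w+1)) :
    Cleared A (D A) (D (D A)) B (D B) (D (D B)) a k g z := by
  have hwB : A = w * B := by rw [hw]; field_simp
  have a1 : D A = D w * B + w * D B := by
    rw [hwB, Derivation.leibniz]; simp; ring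
  have a2 : D (D A) = D (D w) * B + 2 * (D w * D B) + w * D (D B) := by
    rw [a1]; simp only [map_add, Derivation.leibniz, smul_eq_mul]; ring
  unfold Cleared
  rw [a2, a1, hwB]
  linear_combination B ^ 5 * h

theorem pv_B (B K : Type*) [CommRing B] [IsDomain B] [Field K] [Algebra B K]
    [IsFractionRing B K] (δ : Der B) (N ν z : B) (hN : δ N = 0) (hν : δ ν = 0) (hz : δ z = z)
    (hNν : N + ν ≠ 0) (h u v w : B) (hu : u = δ h - N * h) (hv : v = δ h + ν * h)
    (hw : w = δ u + ν * u) (hode : δ (δ h) + ν * δ h = z * (δ h - N * h)) (L n : ℕ) (hn : n ≤ L)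
    (hM : ∀ k ≤ L + 2, Hk δ k h ≠ 0) (hU : ∀ k ≤ L + 1, Hk δ k u ≠ 0)
    (hV : ∀ k ≤ L + 1, Hk δ k v ≠ 0) (hW : ∀ k ≤ L, Hk δ k w ≠ 0) (A Q : B)
    (hA : A = -(N + ν) * Hk δ n w * Hk δ (n + 1) h) (hQ : Q = Hk δ n v * Hk δ (n + 1) u) :
    Cleared A (δ A) (δ (δ A)) Q (δ Q) (δ (δ Q)) (N - n) (N + ν) (ν - 1 - n) z := by
  obtain ⟨D, hD⟩ := exists_D B K δ
  set f := algebraMap B K with hf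
  have inj : Function.Injective f := IsFractionRing.injective B K
  have ne : ∀ x : B, x ≠ 0 → f x ≠ 0 := fun x hx => by
    rwa [Ne, map_eq_zero_iff f inj]
  have hH : ∀ k x, Hk D k (f x) = f (Hk δ k x) := fun k x => Hk_map δ D f hD k x
  have c1 : Chain D (f N) (L+1) (fun k => Hk D k (f h)) (fun k => Hk D k (f u)) := by
    apply chain_mk
    · rw [hD, hN, map_zero]
    · rw [hu, hD, map_sub, map_mul]
    · intro k hk; rw [hH]; exact ne _ (hM k hk)
    · intro k hk; rw [hH]; exact ne _ (hU k hk)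
  have c2 : Chain D (-f ν) (L+1) (fun k => Hk D k (f h)) (fun k => Hk D k (f v)) := by
    apply chain_mk
    · rw [map_neg, hD, hν, map_zero, neg_zero]
    · rw [hv, hD, map_add, map_mul]; ring
    · intro k hk; rw [hH]; exact ne _ (hM k hk)
    · intro k hk; rw [hH]; exact ne _ (hV k hk)
  have c3 : Chain D (-f ν) L (fun k => Hk D k (f u)) (fun k => Hk D k (f w)) := by
    apply chain_mk
    · rw [map_neg, hD, hν, map_zero, neg_zero]
    · rw [hw, hD, map_add, map_mul]; ring
    · intro k hk; rw [hH]; exact ne _ (hU k hk)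
    · intro k hk; rw [hH]; exact ne _ (hW k hk)
  apply Cleared.of_map f inj
  simp only [← hD]
  have := pv_field D (f N) (f ν) (f z) (by rw [← map_add]; exact ne _ hNν) L _ _ _ _
    (by rw [hD, hz]) c1 c2 c3 (by
      simp only [Hk_one, hD, ← map_mul, ← map_add, ← map_sub]
      rw [hode]) n hn _ rfl
  have hQ0 : f Q ≠ 0 := by
    rw [hQ]
    exact ne _ (mul_ne_zero (hV n (by omega)) (hU (n+1) (by omega)))
  have eA : f A / f Q = -(f N + f ν) * Hk D n (f w) * Hk D (n+1) (f h) / (Hk D n (f v) * Hk D (n+1) (f u)) := by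
    rw [hA, hQ]; simp only [hH, map_mul, map_neg, map_add]
  rw [← eA] at this
  have r := cleared_K D (f A) (f Q) (f N - n) (f N + f ν) (f ν - 1 - n) (f z) _ hQ0 rfl this
  simpa only [map_sub, map_add, map_natCast, map_one] using r

end PVAux
end

section
namespace PVAux
open Polynomial

theorem ser_add {A : Type*} [CommRing A] (c d : ℕ → A) (T : ℕ) :
    ser c T + ser d T = ser (fun k => c k + d k) T := by
  unfold ser
  rw [← Finset.sum_add_distrib]
  refine Finset.sum_congr rfl fun k _ => ?_
  rw [C_add]; ring

theorem ser_smul {A : Type*} [CommRing A] (a : A) (c : ℕ → A) (T : ℕ) :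
    C a * ser c T = ser (fun k => a * c k) T := by
  unfold ser
  rw [Finset.mul_sum]
  refine Finset.sum_congr rfl fun k _ => ?_
  rw [C_mul]; ring

theorem ser_congr {A : Type*} [CommRing A] (c d : ℕ → A) (T : ℕ) (h : ∀ k < T, c k = d k) :
    ser c T = ser d T := by
  unfold ser
  refine Finset.sum_congr rfl fun k hk => ?_
  rw [h k (mem_range.mp hk)]

theorem ser_map {A A' : Type*} [CommRing A] [CommRing A'] (f : A →+* A') (c : ℕ → A) (T : ℕ) :
    mapRingHom f (ser c T) = ser (fun k => f (c k)) T := by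
  unfold ser
  rw [map_sum]
  refine Finset.sum_congr rfl fun k _ => ?_
  simp

theorem eul_C {A : Type*} [CommRing A] (a : A) : eul A (C a) = 0 := by
  rw [eul_apply]; simp

theorem eul_map {A A' : Type*} [CommRing A] [CommRing A'] (f : A →+* A') (p : A[X]) :
    eul A' (mapRingHom f p) = mapRingHom f (eul A p) := by
  rw [eul_apply, eul_apply]; simp [derivative_map]

/-- Laguerre coefficients with a symbolic parameter -/
def cc (N k : ℕ) : ℝ[X] :=
  C ((-1 : ℝ) ^ k / ((N - k).factorial * k.factorial)) *
    ∏ i ∈ range (N - k), (X + C ((N : ℝ) - i))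

theorem cc_rec (N k : ℕ) (hk : k < N) :
    ((k : ℝ[X]) + 1) * ((k : ℝ[X]) + 1 + X) * cc N (k + 1) = ((k : ℝ[X]) - (N : ℝ[X])) * cc N k := by
  obtain ⟨j, rfl⟩ : ∃ j, N = k + 1 + j := ⟨N - (k + 1), by omega⟩
  unfold cc
  have e1 : k + 1 + j - (k + 1) = j := by omega
  have e2 : k + 1 + j - k = j + 1 := by omega
  rw [e1, e2, Finset.prod_range_succ, Nat.factorial_succ, Nat.factorial_succ]
  have hj : ((j.factorial : ℕ) : ℝ) ≠ 0 := by exact_mod_cast j.factorial_ne_zero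
  have hkf : ((k.factorial : ℕ) : ℝ) ≠ 0 := by exact_mod_cast k.factorial_ne_zero
  have hj1 : (j : ℝ) + 1 ≠ 0 := by positivity
  have hk1 : (k : ℝ) + 1 ≠ 0 := by positivity
  have c1 : ((k : ℝ[X]) + 1) = C ((k : ℝ) + 1) := by simp
  have c2 : ((k : ℝ[X]) - ((k + 1 + j : ℕ) : ℝ[X])) = C (-((j : ℝ) + 1)) := by
    simp; ring
  have c3 : (X + C (((k + 1 + j : ℕ) : ℝ) - (j : ℕ)) : ℝ[X]) = ((k : ℝ[X]) + 1 + X) := by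
    push_cast; rw [c1, add_comm]; congr 2; ring
  rw [c3, c2, c1]
  have c4 : C ((k : ℝ) + 1) * C ((-1 : ℝ) ^ (k + 1) / (j.factorial * ((k + 1) * k.factorial : ℕ))) =
      C (-((j : ℝ) + 1)) * C ((-1 : ℝ) ^ k / (((j + 1) * j.factorial : ℕ) * k.factorial)) := by
    rw [← C_mul, ← C_mul]; congr 1
    push_cast
    field_simp
    ring
  linear_combination (C ((k : ℝ) + 1) + X) *
    (∏ i ∈ range j, (X + C (((k + 1 + j : ℕ) : ℝ) - i))) * c4

theorem cc_pos (N k : ℕ) (hk : k < N + 1) : 0 < (cc N k).eval 1 * (-1) ^ k := by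
  unfold cc
  rw [eval_mul, eval_C, eval_prod]
  have : (-1 : ℝ) ^ k * (-1) ^ k = 1 := by rw [← mul_pow]; norm_num
  have e : ∀ p q : ℝ, (-1 : ℝ) ^ k / q * p * (-1) ^ k = p / q := by
    intro p q
    rw [div_mul_eq_mul_div, div_mul_eq_mul_div]; congr 1
    linear_combination p * this
  rw [e]
  apply div_pos
  · apply Finset.prod_pos
    intro i hi
    have hi' : i ≤ N := by have := mem_range.mp hi; omega
    have : (i : ℝ) ≤ N := by exact_mod_cast hi'
    simp
    linarith
  · positivity

theorem pv_poly (N n : ℕ) (hn : n < N) (h u v w A Q : ℝ[X][X]) (hh : h = ser (cc N) (N + 1))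
    (hu : u = ser (fun k => ((k : ℝ[X]) - (N : ℝ[X])) * cc N k) (N + 1))
    (hv : v = ser (fun k => ((k : ℝ[X]) + X) * cc N k) (N + 1))
    (hw : w = ser (fun k => ((k : ℝ[X]) - (N : ℝ[X])) * ((k : ℝ[X]) + X) * cc N k) (N + 1))
    (hA : A = -((N : ℝ[X][X]) + C X) * Hk (eul ℝ[X]) n w * Hk (eul ℝ[X]) (n + 1) h)
    (hQ : Q = Hk (eul ℝ[X]) n v * Hk (eul ℝ[X]) (n + 1) u) :
    Cleared A (eul ℝ[X] A) (eul ℝ[X] (eul ℝ[X] A)) Q (eul ℝ[X] Q) (eul ℝ[X] (eul ℝ[X] Q))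
      ((N : ℝ[X][X]) - (n : ℝ[X][X])) ((N : ℝ[X][X]) + C X) (C X - 1 - (n : ℝ[X][X])) X := by
  have hNC : (N : ℝ[X][X]) = C (N : ℝ[X]) := by simp
  have hu' : u = eul ℝ[X] h - (N : ℝ[X][X]) * h := by
    rw [hu, hh, eul_ser, hNC, sub_eq_add_neg, ← neg_mul, ← C_neg, ser_smul, ser_add]
    congr 1; ext1 k; ring
  have hv' : v = eul ℝ[X] h + (C X : ℝ[X][X]) * h := by
    rw [hv, hh, eul_ser, ser_smul, ser_add]
    congr 1; ext1 k; ring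
  have hw' : w = eul ℝ[X] u + (C X : ℝ[X][X]) * u := by
    rw [hw, hu, eul_ser, ser_smul, ser_add]
    congr 1; ext1 k; ring
  have hode : eul ℝ[X] (eul ℝ[X] h) + (C X : ℝ[X][X]) * eul ℝ[X] h
      = X * (eul ℝ[X] h - (N : ℝ[X][X]) * h) := by
    rw [← hu', hu, hh, eul_ser, eul_ser, ser_smul, ser_add]
    unfold ser
    rw [Finset.sum_range_succ', Finset.sum_range_succ _ N]
    simp only [sub_self, zero_mul, C_0, add_zero, Nat.cast_zero, mul_zero]
    rw [Finset.mul_sum]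
    refine Finset.sum_congr rfl fun k hk => ?_
    rw [← cc_rec N k (mem_range.mp hk)]
    push_cast
    simp only [C_mul, C_add]
    ring
  have hM : ∀ k ≤ N + 1, Hk (eul ℝ[X]) k h ≠ 0 := by
    intro k hk
    rw [hh]
    apply Hk_ne
    exact (hankel_pos _ k (N+1) (N+1) hk le_rfl (fun k hk => (cc_pos N k hk).le)
      (fun k hk => (cc_pos N k hk))).ne'
  have hV : ∀ k ≤ N + 1, Hk (eul ℝ[X]) k v ≠ 0 := by
    intro k hk
    rw [hv]
    apply Hk_ne
    have hp : ∀ k < N + 1, 0 < eval 1 (((k : ℝ[X]) + X) * cc N k) * (-1) ^ k := by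
      intro k hk
      have := cc_pos N k hk
      simp only [eval_mul, eval_add, eval_natCast, eval_X]
      rw [mul_assoc]; positivity
    exact (hankel_pos _ k (N+1) (N+1) hk le_rfl (fun k hk => (hp k hk).le) hp).ne'
  have hU : ∀ k ≤ N, Hk (eul ℝ[X]) k u ≠ 0 := by
    intro k hk
    rw [hu]
    apply Hk_ne
    apply hankel_neg _ k N (N+1) hk (by omega)
    · intro k hk
      have := cc_pos N k hk
      have hk' : (k : ℝ) ≤ N := by exact_mod_cast (by omega : k ≤ N)
      simp only [eval_mul, eval_sub, eval_natCast]
      rw [mul_assoc]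
      exact mul_nonpos_of_nonpos_of_nonneg (by linarith) this.le
    · intro k hk
      have := cc_pos N k (by omega)
      have hk' : (k : ℝ) < N := by exact_mod_cast hk
      simp only [eval_mul, eval_sub, eval_natCast]
      rw [mul_assoc]
      exact mul_neg_of_neg_of_pos (by linarith) this
  have hW : ∀ k ≤ N, Hk (eul ℝ[X]) k w ≠ 0 := by
    intro k hk
    rw [hw]
    apply Hk_ne
    apply hankel_neg _ k N (N+1) hk (by omega)
    · intro k hk
      have := cc_pos N k hk
      have hk' : (k : ℝ) ≤ N := by exact_mod_cast (by omega : k ≤ N)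
      simp only [eval_mul, eval_sub, eval_add, eval_X, eval_natCast]
      rw [mul_assoc, mul_assoc]
      exact mul_nonpos_of_nonpos_of_nonneg (by linarith) (by positivity)
    · intro k hk
      have := cc_pos N k (by omega)
      have hk' : (k : ℝ) < N := by exact_mod_cast hk
      simp only [eval_mul, eval_sub, eval_add, eval_X, eval_natCast]
      rw [mul_assoc, mul_assoc]
      exact mul_neg_of_neg_of_pos (by linarith) (by positivity)
  obtain ⟨L, rfl⟩ : ∃ L, N = L + 1 := ⟨N - 1, by omega⟩
  refine pv_B ℝ[X][X] (FractionRing ℝ[X][X]) (eul ℝ[X]) _ (C X) X ?_ (eul_C _) ?_ ?_ h u v w hu' hv' hw' hode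
    L n (by omega) hM hU (fun k hk => hV k (by omega)) (fun k hk => hW k (by omega)) A Q hA hQ
  · rw [hNC, eul_C]
  · rw [eul_apply]; simp
  · rw [hNC, ← C_add, Ne, C_eq_zero]
    intro h0
    have := congrArg (eval 1) h0
    simp at this
    have h3 : (0:ℝ) ≤ L := by positivity
    linarith

theorem eul_eval (p : ℝ[X]) (z : ℝ) : (eul ℝ p).eval z = z * p.derivative.eval z := by
  rw [eul_apply]; simp

theorem eul_eval2 (p : ℝ[X]) (z : ℝ) : (eul ℝ (eul ℝ p)).eval z =
    z * p.derivative.eval z + z ^ 2 * p.derivative.derivative.eval z := by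
  rw [eul_eval, eul_apply]; simp; ring

theorem pv_real (N n : ℕ) (hn : n < N) (ν : ℝ) (c : ℕ → ℝ) (hc : ∀ k, c k = (cc N k).eval ν)
    (A Q : ℝ[X])
    (hA : A = C (-((N : ℝ) + ν)) *
      Hk (eul ℝ) n (ser (fun k => ((k : ℝ) - N) * ((k : ℝ) + ν) * c k) (N + 1)) *
      Hk (eul ℝ) (n + 1) (ser c (N + 1)))
    (hQ : Q = Hk (eul ℝ) n (ser (fun k => ((k : ℝ) + ν) * c k) (N + 1)) *
      Hk (eul ℝ) (n + 1) (ser (fun k => ((k : ℝ) - N) * c k) (N + 1))) (z : ℝ) :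
    Cleared (A.eval z) (z * A.derivative.eval z)
      (z * A.derivative.eval z + z ^ 2 * A.derivative.derivative.eval z)
      (Q.eval z) (z * Q.derivative.eval z)
      (z * Q.derivative.eval z + z ^ 2 * Q.derivative.derivative.eval z)
      ((N : ℝ) - n) (N + ν) (ν - 1 - n) z := by
  have h := (pv_poly N n hn _ _ _ _ _ _ rfl rfl rfl rfl rfl rfl).map (mapRingHom (evalRingHom ν))
  have hm : ∀ (k : ℕ) (x : ℝ[X][X]), mapRingHom (evalRingHom ν) (Hk (eul ℝ[X]) k x) =
    Hk (eul ℝ) k (mapRingHom (evalRingHom ν) x) := fun k x =>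
      (Hk_map _ _ (mapRingHom (evalRingHom ν)) (fun a => eul_map _ a) k x).symm
  simp only [← eul_map, map_mul, hm, ser_map, map_neg, map_add, map_sub, map_natCast, map_one] at h
  simp only [coe_mapRingHom, map_X, map_C, coe_evalRingHom, eval_X, ← hc] at h
  have e1 : -((N : ℝ[X]) + C ν) = C (-((N : ℝ) + ν)) := by simp
  rw [e1, ← hA, ← hQ] at h
  have := h.map (evalRingHom z)
  simp only [coe_evalRingHom, eul_eval2] at this
  simpa only [eul_eval, eval_sub, eval_add, eval_natCast, eval_C,
    eval_X, eval_one] using this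

end PVAux
end

section
namespace PVAux
open Polynomial

/-- coefficients of the Laguerre polynomial -/
def lc (N : ℕ) (α : ℝ) (k : ℕ) : ℝ :=
  (-1 : ℝ) ^ k * genBinom ((N : ℝ) + α) (N - k) / (Nat.factorial k)

def lag (N : ℕ) (α : ℝ) : ℝ[X] := ser (lc N α) (N + 1)

theorem lagL_eval (N : ℕ) (α z : ℝ) : lagL (N : ℤ) α z = (lag N α).eval z := by
  unfold lagL lag ser lc
  rw [if_neg (by omega), eval_finsetSum]
  simp only [Int.toNat_natCast, Int.cast_natCast]
  refine Finset.sum_congr rfl fun k _ => ?_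
  simp
  ring

theorem iter_eval (p : ℝ[X]) (j : ℕ) :
    ((fun (g : ℝ → ℝ) => fun t => t * deriv g t)^[j] (fun z => p.eval z)) =
      fun z => ((eul ℝ)^[j] p).eval z := by
  induction j with
  | zero => rfl
  | succ j ih =>
    rw [Function.iterate_succ_apply', Function.iterate_succ_apply', ih]
    ext t
    rw [eul_eval]; simp

theorem tau_eval (M : ℤ) (n N : ℕ) (μ α : ℝ) (h1 : M + n = (N : ℤ)) (h2 : (n : ℝ) + μ = α)
    (z : ℝ) : tauP M n μ z = (Hk (eul ℝ) n (lag N α)).eval z := by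
  unfold tauP Hk
  rw [← coe_evalRingHom, RingHom.map_det]
  congr 1
  ext j k
  simp only [Matrix.of_apply, RingHom.mapMatrix_apply, Matrix.map_apply, coe_evalRingHom]
  rw [h1, h2, show lagL (N : ℤ) α = fun z => (lag N α).eval z from funext (lagL_eval N α),
    iter_eval]

theorem gb1 (x : ℝ) (j : ℕ) : (x - j) * genBinom x j = x * genBinom (x - 1) j := by
  unfold genBinom
  rw [← mul_div_assoc, ← mul_div_assoc]
  congr 1
  have e := Finset.prod_range_succ (fun i : ℕ => x - i) j
  have e2 := Finset.prod_range_succ' (fun i : ℕ => x - i) j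
  rw [mul_comm, ← e, e2, mul_comm]
  simp
  left
  refine Finset.prod_congr rfl fun i _ => ?_
  ring

theorem gb2 (x : ℝ) (j : ℕ) : ((j : ℝ) + 1) * genBinom x (j + 1) = x * genBinom (x - 1) j := by
  unfold genBinom
  have e2 := Finset.prod_range_succ' (fun i : ℕ => x - i) j
  rw [e2, Nat.factorial_succ]
  have hj : ((j.factorial : ℕ) : ℝ) ≠ 0 := by exact_mod_cast j.factorial_ne_zero
  have hj1 : (j : ℝ) + 1 ≠ 0 := by positivity
  have : ∏ i ∈ range j, (x - ((i + 1 : ℕ) : ℝ)) = ∏ i ∈ range j, (x - 1 - i) := by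
    refine Finset.prod_congr rfl fun i _ => ?_
    push_cast; ring
  rw [this]
  push_cast
  field_simp
  simp [mul_comm]

theorem cc_eval (N k : ℕ) (ν : ℝ) : lc N ν k = (cc N k).eval ν := by
  unfold cc lc genBinom
  rw [eval_mul, eval_C, eval_prod]
  have : ∏ i ∈ range (N - k), ((N : ℝ) + ν - i) =
      ∏ i ∈ range (N - k), eval ν (X + C ((N : ℝ) - i)) := by
    refine Finset.prod_congr rfl fun i _ => ?_
    simp; ring
  rw [this]
  have hj : (((N - k).factorial : ℕ) : ℝ) ≠ 0 := by exact_mod_cast (N - k).factorial_ne_zero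
  have hk : ((k.factorial : ℕ) : ℝ) ≠ 0 := by exact_mod_cast k.factorial_ne_zero
  field_simp

theorem lc_v (N k : ℕ) (ν : ℝ) (hk : k ≤ N) :
    ((k : ℝ) + ν) * lc N ν k = ((N : ℝ) + ν) * lc N (ν - 1) k := by
  have := gb1 ((N : ℝ) + ν) (N - k)
  rw [Nat.cast_sub hk] at this
  unfold lc
  rw [show (N : ℝ) + (ν - 1) = N + ν - 1 by ring]
  linear_combination (-1 : ℝ) ^ k / (Nat.factorial k) * this

theorem lc_u (N k : ℕ) (ν : ℝ) (hk : k ≤ N) :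
    ((k : ℝ) - (N + 1 : ℕ)) * lc (N + 1) ν k = -(((N + 1 : ℕ) : ℝ) + ν) * lc N ν k := by
  have := gb2 (((N + 1 : ℕ) : ℝ) + ν) (N - k)
  rw [Nat.cast_sub hk] at this
  unfold lc
  rw [show N + 1 - k = N - k + 1 by omega]
  rw [show (((N + 1 : ℕ) : ℝ) + ν - 1) = N + ν by push_cast; ring] at this
  push_cast at this ⊢
  linear_combination -(-1 : ℝ) ^ k / (Nat.factorial k) * this

theorem ser_v (N : ℕ) (ν : ℝ) :
    ser (fun k => ((k : ℝ) + ν) * lc N ν k) (N + 1) = C ((N : ℝ) + ν) * lag N (ν - 1) := by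
  unfold lag
  rw [ser_smul]
  exact ser_congr _ _ _ fun k hk => lc_v N k ν (by omega)

theorem ser_top (N : ℕ) (d : ℕ → ℝ) (h : d N = 0) : ser d (N + 1) = ser d N := by
  unfold ser
  rw [Finset.sum_range_succ, h]; simp

theorem ser_u (N : ℕ) (ν : ℝ) :
    ser (fun k => ((k : ℝ) - (N + 1 : ℕ)) * lc (N + 1) ν k) (N + 1 + 1) =
      C (-(((N + 1 : ℕ) : ℝ) + ν)) * lag N ν := by
  unfold lag
  rw [ser_smul, ser_top _ _ (by simp)]
  exact ser_congr _ _ _ fun k hk => lc_u N k ν (by omega)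

theorem ser_w (N : ℕ) (ν : ℝ) :
    ser (fun k => ((k : ℝ) - (N + 1 : ℕ)) * ((k : ℝ) + ν) * lc (N + 1) ν k) (N + 1 + 1) =
      C (-(((N + 1 : ℕ) : ℝ) + ν) * ((N : ℝ) + ν)) * lag N (ν - 1) := by
  unfold lag
  rw [ser_smul, ser_top _ _ (by simp)]
  refine ser_congr _ _ _ fun k hk => ?_
  have h1 := lc_u N k ν (by omega)
  have h2 := lc_v N k ν (by omega)
  linear_combination ((k : ℝ) + ν) * h1 - (((N + 1 : ℕ) : ℝ) + ν) * h2

theorem pv_final (A Q : ℝ[X]) (w : ℝ → ℝ) (hw : ∀ t, w t = A.eval t / Q.eval t) (z a k g : ℝ)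
    (hz : z ≠ 0) (hQ : Q.eval z ≠ 0) (w0 : w z ≠ 0) (w1 : w z ≠ 1)
    (h : Cleared (A.eval z) (z * A.derivative.eval z)
      (z * A.derivative.eval z + z ^ 2 * A.derivative.derivative.eval z)
      (Q.eval z) (z * Q.derivative.eval z)
      (z * Q.derivative.eval z + z ^ 2 * Q.derivative.derivative.eval z) a k g z) :
    PV (a ^ 2 / 2) (-k ^ 2 / 2) g w z := by
  have hwf : w = fun t => A.eval t / Q.eval t := funext hw
  have hd : ∀ (P S : ℝ[X]) (t : ℝ), S.eval t ≠ 0 →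
      deriv (fun t => P.eval t / S.eval t) t =
        (P.derivative.eval t * S.eval t - P.eval t * S.derivative.eval t) / (S.eval t) ^ 2 := by
    intro P S t ht
    exact ((P.hasDerivAt t).div (S.hasDerivAt t) ht).deriv
  have d1 : deriv w z = (A.derivative.eval z * Q.eval z - A.eval z * Q.derivative.eval z) /
      (Q.eval z) ^ 2 := by rw [hwf]; exact hd A Q z hQ
  have hev : deriv w =ᶠ[nhds z] fun t => (A.derivative * Q - A * Q.derivative).eval t /
      (Q ^ 2).eval t := by
    filter_upwards [Q.continuous.continuousAt.eventually_ne hQ] with t ht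
    rw [hwf, hd A Q t ht]
    simp
  have d2 : iteratedDeriv 2 w z = ((A.derivative.derivative.eval z * Q.eval z -
      A.eval z * Q.derivative.derivative.eval z) * Q.eval z - 2 * Q.derivative.eval z *
      (A.derivative.eval z * Q.eval z - A.eval z * Q.derivative.eval z)) / (Q.eval z) ^ 3 := by
    rw [iteratedDeriv_succ, iteratedDeriv_one, hev.deriv_eq, hd _ _ z (by simpa using hQ)]
    simp [derivative_pow]
    field_simp
    ring
  have ea : A.eval z = w z * Q.eval z := by rw [hw z]; field_simp
  have ea1 : A.derivative.eval z = deriv w z * Q.eval z + w z * Q.derivative.eval z := by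
    rw [d1, hw z]; field_simp; ring
  have ea2 : A.derivative.derivative.eval z = iteratedDeriv 2 w z * Q.eval z +
      2 * deriv w z * Q.derivative.eval z + w z * Q.derivative.derivative.eval z := by
    rw [d2, d1, hw z]; field_simp; ring
  unfold Cleared at h
  rw [ea2, ea1, ea] at h
  unfold PV
  generalize w z = x at *
  generalize deriv w z = x1 at *
  generalize iteratedDeriv 2 w z = x2 at *
  generalize eval z Q = q at *
  generalize eval z (derivative Q) = q1 at *
  generalize eval z (derivative (derivative Q)) = q2 at *
  have hx1 : x - 1 ≠ 0 := sub_ne_zero.mpr w1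
  have key : 2 * x * (x - 1) * (z * x1 + z ^ 2 * x2) = (3 * x - 1) * (z * x1) ^ 2 +
      (x - 1) ^ 3 * (a ^ 2 * x ^ 2 - k ^ 2) + 2 * g * z * x ^ 2 * (x - 1)
      - z ^ 2 * x ^ 2 * (x + 1) := by
    apply mul_left_cancel₀ (pow_ne_zero 5 hQ)
    linear_combination h
  field_simp
  linear_combination key

theorem main (m n : ℕ) (hm : 1 ≤ m) (hn : 1 ≤ n) (μ : ℝ)
    (hden : (m : ℝ) + μ + 2 * n + 1 ≠ 0) (w : ℝ → ℝ)
    (hw : w = fun z =>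
      (((m : ℝ) + μ + 2 * n) / ((m : ℝ) + μ + 2 * n + 1)) ^ n *
        (tauP ((m : ℤ) - 1) n μ z * tauP ((m : ℤ) - 1) (n + 1) μ z) /
        (tauP (m : ℤ) n μ z * tauP ((m : ℤ) - 2) (n + 1) μ z)) :
    ∀ z : ℝ, z ≠ 0 → tauP (m : ℤ) n μ z * tauP ((m : ℤ) - 2) (n + 1) μ z ≠ 0 →
      w z ≠ 0 → w z ≠ 1 →
      PV ((m : ℝ) ^ 2 / 2) (-((m : ℝ) + 2 * n + 1 + μ) ^ 2 / 2) μ w z := by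
  intro z hz hden2 w0 w1
  obtain ⟨p, rfl⟩ : ∃ p, m = p + 1 := ⟨m - 1, by omega⟩
  set ν : ℝ := (n : ℝ) + 1 + μ with hν
  set x : ℝ := ((p + n + 1 : ℕ) : ℝ) + ν with hx
  have hxx : x = ((p + 1 : ℕ) : ℝ) + μ + 2 * n + 1 := by rw [hx, hν]; push_cast; ring
  have hx1 : ((p + n : ℕ) : ℝ) + ν = x - 1 := by rw [hx]; push_cast; ring
  have t1 := fun z => tau_eval (((p + 1 : ℕ) : ℤ) - 1) n (p + n) μ (ν - 1) (by push_cast; ring)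
    (by rw [hν]; ring) z
  have t2 := fun z => tau_eval (((p + 1 : ℕ) : ℤ) - 1) (n + 1) (p + n + 1) μ ν (by push_cast; ring)
    (by rw [hν]; push_cast; ring) z
  have t3 := fun z => tau_eval ((p + 1 : ℕ) : ℤ) n (p + n + 1) μ (ν - 1) (by push_cast; ring)
    (by rw [hν]; ring) z
  have t4 := fun z => tau_eval (((p + 1 : ℕ) : ℤ) - 2) (n + 1) (p + n) μ ν (by push_cast; ring)
    (by rw [hν]; push_cast; ring) z
  have hs : ∀ (a : ℝ) (k : ℕ) (h : ℝ[X]) (t : ℝ), (Hk (eul ℝ) k (C a * h)).eval t =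
      a ^ k * (Hk (eul ℝ) k h).eval t := by
    intro a k h t
    rw [Hk_smul _ _ (eul_C a)]; simp
  have h := pv_real (p + n + 1) n (by omega) ν (lc (p + n + 1) ν) (fun k => cc_eval _ k ν) _ _
    rfl rfl z
  rw [ser_v, ser_u, ser_w, ← hx, hx1] at h
  rw [← hxx] at hden
  have hc : ((-1 : ℝ) ^ n) ≠ 0 := pow_ne_zero _ (by norm_num)
  have hQe : ∀ t, eval t (Hk (eul ℝ) n (C x * lag (p + n + 1) (ν - 1)) *
      Hk (eul ℝ) (n + 1) (C (-x) * lag (p + n) ν)) = (-(-1) ^ n * x ^ (n + 1)) *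
      (x ^ n * (tauP ((p + 1 : ℕ) : ℤ) n μ t * tauP (((p + 1 : ℕ) : ℤ) - 2) (n + 1) μ t)) := by
    intro t
    rw [eval_mul, hs, hs, t3, t4, neg_pow x]; ring
  have hAe : ∀ t, eval t (C (-x) * Hk (eul ℝ) n (C (-x * (x - 1)) * lag (p + n) (ν - 1)) *
      Hk (eul ℝ) (n + 1) (ser (lc (p + n + 1) ν) (p + n + 1 + 1))) = (-(-1) ^ n * x ^ (n + 1)) *
      ((x - 1) ^ n * (tauP (((p + 1 : ℕ) : ℤ) - 1) n μ t *
        tauP (((p + 1 : ℕ) : ℤ) - 1) (n + 1) μ t)) := by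
    intro t
    rw [eval_mul, eval_mul, hs, t1, t2, mul_pow, neg_pow x, eval_C]; unfold lag; ring
  have hcst : -(-1 : ℝ) ^ n * x ^ (n + 1) ≠ 0 := mul_ne_zero (neg_ne_zero.mpr hc) (pow_ne_zero _ hden)
  have hwt : ∀ t, w t = eval t (C (-x) * Hk (eul ℝ) n (C (-x * (x - 1)) * lag (p + n) (ν - 1)) *
      Hk (eul ℝ) (n + 1) (ser (lc (p + n + 1) ν) (p + n + 1 + 1))) /
      eval t (Hk (eul ℝ) n (C x * lag (p + n + 1) (ν - 1)) *
      Hk (eul ℝ) (n + 1) (C (-x) * lag (p + n) ν)) := by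
    intro t
    rw [hQe, hAe, mul_div_mul_left _ _ hcst, hw, ← hxx]
    simp only
    rw [show ((p + 1 : ℕ) : ℝ) + μ + 2 * n = x - 1 by rw [hxx]; ring, div_pow,
      div_mul_eq_mul_div, div_div]
  have r := pv_final _ _ w hwt z _ _ _ hz (by
    rw [hQe]; exact mul_ne_zero hcst (mul_ne_zero (pow_ne_zero _ hden) hden2)) w0 w1 h
  have g1 : ((p + n + 1 : ℕ) : ℝ) - n = ((p + 1 : ℕ) : ℝ) := by push_cast; ring
  have g2 : ν - 1 - n = μ := by rw [hν]; ring
  rw [g1, g2] at r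
  rw [show ((p + 1 : ℕ) : ℝ) + 2 * n + 1 + μ = x by rw [hxx]; ring]
  exact r

end PVAux
end

/-- rational solutions of `P_V` in terms of `τ_{m,n}^{(μ)}`. -/
theorem pv_rational_solution_tau (m n : ℕ) (hm : 1 ≤ m) (hn : 1 ≤ n) (μ : ℝ)
    (hden : (m : ℝ) + μ + 2 * n + 1 ≠ 0) (w : ℝ → ℝ)
    (hw : w = fun z =>
      (((m : ℝ) + μ + 2 * n) / ((m : ℝ) + μ + 2 * n + 1)) ^ n *
        (tauP ((m : ℤ) - 1) n μ z * tauP ((m : ℤ) - 1) (n + 1) μ z) /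
        (tauP (m : ℤ) n μ z * tauP ((m : ℤ) - 2) (n + 1) μ z)) :
    ∀ z : ℝ, z ≠ 0 → tauP (m : ℤ) n μ z * tauP ((m : ℤ) - 2) (n + 1) μ z ≠ 0 →
      w z ≠ 0 → w z ≠ 1 →
      PV ((m : ℝ) ^ 2 / 2) (-((m : ℝ) + 2 * n + 1 + μ) ^ 2 / 2) μ w z := by
  exact PVAux.main m n hm hn μ hden w hw
end
end
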